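/- Let p be an odd prime, and let n > 0 and r be integers with (p−1) ∤ n and p ∤ r. Let b be an integer with 1 ≤ b ≤ v, where v is the p-adic valuation of pn, and set b' = (p^b−1)/(p−1). Then ((−r)^n·F_p(pn,r) + (−1)^{(b−1)n}·∏_{1≤k≤b'·n_*, p∤k} k)/n_*! ≡ n_*·(p·B_{φ(p^b)} − p + 1) − p^b·n_*·H_{n_*} + n·(r^{p−1} − 1) − p·n·Σ_{k=2}^{p−n_*−1} binom(n_*+k, n_*)·B_k/(k·r^k) (mod p^{b+1}). -/

import Mathlib

open Finset

/-- `x ≡ y (mod p^c)` for rationals: `x = y` or the `p`-adic valuation of `x - y`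
is at least `c`. -/
def modCong (p : ℕ) (c : ℤ) (x y : ℚ) : Prop :=
  x = y ∨ c ≤ padicValRat p (x - y)

/-- `C_p(n,r) = ∑_{0 ≤ k ≤ n, k ≡ r (mod p)} (-1)^k * binom(n,k)`. -/
def Cp (p n : ℕ) (r : ℤ) : ℚ :=
  ∑ k ∈ range (n+1), if ((k : ℤ) - r) % p = 0 then (-1 : ℚ)^k * (n.choose k) else 0

/-- The Fleck quotient `F_p(n,r) = (-p)^{-⌊(n-1)/(p-1)⌋} C_p(n,r) + [n = 0]`. -/
noncomputable def Fp (p n : ℕ) (r : ℤ) : ℚ :=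
  (-(p:ℚ)) ^ (-(Int.fdiv ((n:ℤ) - 1) ((p:ℤ) - 1))) * Cp p n r + (if n = 0 then 1 else 0)

/-- `n_*`: the unique integer in `{1,…,p-1}` with `n_* ≡ n (mod p-1)`. -/
def nLow (p n : ℕ) : ℕ := ((((n:ℤ) - 1) % ((p:ℤ) - 1)) + 1).toNat

/-- Harmonic number `H_r = ∑_{k=1}^r 1/k`. -/
def harm (r : ℕ) : ℚ := ∑ k ∈ Finset.Icc 1 r, 1/(k:ℚ)

/-!
Let `U` be the integer polynomial with `(1 - X) ^ p = 1 - X ^ p - p (1 - X) U`. Modulo `X ^ p - 1`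
this gives `(1 - X) ^ (a + (p - 1) e) = (-p) ^ e (1 - X) ^ a U ^ e`, so for `1 ≤ a ≤ p - 1` the
Fleck quotient `F_p(a + (p - 1) e, r)` is the sum of the coefficients of `(1 - X) ^ a U ^ e` at the
exponents congruent to `r` modulo `p`.

Take `a = n_*`, so that `p n = a + (p - 1) e`. Writing `U ^ p = U(X ^ p) + p q`, one sees that
replacing `e` by an exponent `e₀` congruent to it modulo `p ^ b` changes this sum modulo
`p ^ (b + 1)` only by `e - e₀` times the corresponding sum of `(1 - X) ^ a U ^ e₀ q`, which matters
only modulo `p`. The exponent `e₀ = a (1 + p + ⋯ + p ^ b)` belongs to the binomial coefficients of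
`a p ^ (b + 1)`; there the orthogonality of power sums modulo `p` and congruences for Stirling
numbers evaluate the sum as a product of integers prime to `p`.

In the group ring `𝔽_p[X] / (X ^ p - 1)` the element `(1 - X) U` is the truncated series of
`-log X`, with the truncated exponential as its inverse, and `q` is expressed by the truncated
generating function of the Bernoulli numbers; this evaluates the correction term. What remains are
the `p`-adic expansion of the products of integers prime to `p`, whose first-order term is a
harmonic sum, and `p B_{φ(p ^ b)} ≡ p + ∏ k`, over the `k < p ^ b` prime to `p`, which follows from
Faulhaber's formula.
-/

section Products

theorem exists_prod_add_mul_eq {ι R : Type*} [CommRing R] (s : Finset ι) (f g : ι → R) :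
    ∃ y : R, ∀ t : R, t ^ 2 = 0 → ∏ k ∈ s, (f k + t * g k) = ∏ k ∈ s, f k + t * y := by
  let P : Polynomial R := ∏ k ∈ s, (Polynomial.C (f k) + Polynomial.X * Polynomial.C (g k))
  refine ⟨P.derivative.eval 0, fun t ht => ?_⟩
  have h := P.eval_add_of_sq_eq_zero 0 t ht
  simpa [P, Polynomial.eval_prod, mul_comm t] using h

theorem prod_range_add_mul_of_sq_eq_zero {R : Type*} [CommRing R] (x : R) {y : R}
    (hy : y ^ 2 = 0) (m : ℕ) :
    ∏ i ∈ range (m + 1), (x + i * y) = x ^ (m + 1) + (m + 1).choose 2 * x ^ m * y := by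
  induction m with
  | zero => simp
  | succ m ih =>
    rw [prod_range_succ, ih, Nat.choose_succ_succ' (m + 1) 1, Nat.choose_one_right]
    push_cast
    linear_combination ((m + 1).choose 2 * x ^ m * (m + 1) : R) * hy

theorem prod_range_mul_of_sq_eq_zero {R : Type*} [CommRing R] (f g : ℕ → R) {t : R}
    (ht : t ^ 2 = 0) {N : ℕ} (hf : ∀ k i : ℕ, f (k + N * i) = f k + i * t * g k) :
    ∃ y : R, ∀ m : ℕ, ∏ k ∈ range (N * m), f k =
      ∏ i ∈ range m, (∏ k ∈ range N, f k + i * (t * y)) := by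
  obtain ⟨y, hy⟩ := exists_prod_add_mul_eq (range N) f g
  refine ⟨y, fun m => ?_⟩
  induction m with
  | zero => simp
  | succ m ih =>
    have hm : (m * t : R) ^ 2 = 0 := by rw [mul_pow, ht, mul_zero]
    rw [Nat.mul_succ, prod_range_add, ih, prod_range_succ, ← mul_assoc, ← hy _ hm]
    simp only [add_comm (N * m), hf]

theorem dvd_choose_two_of_odd {n : ℕ} (hn : Odd n) : n ∣ n.choose 2 := by
  obtain ⟨k, rfl⟩ := hn
  rw [Nat.choose_two_right, Nat.add_sub_cancel, mul_left_comm,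
    Nat.mul_div_cancel_left _ two_pos]
  exact dvd_mul_right _ _

theorem prod_range_mul_eq_pow_of_mul_eq_zero {R : Type*} [CommRing R] (f g : ℕ → R) {t : R}
    (ht : t ^ 2 = 0) {N n : ℕ} (hn : Odd n) (hnt : n * t = 0)
    (hf : ∀ k i : ℕ, f (k + N * i) = f k + i * t * g k) :
    ∏ k ∈ range (N * n), f k = (∏ k ∈ range N, f k) ^ n := by
  obtain ⟨y, hy⟩ := prod_range_mul_of_sq_eq_zero f g ht hf
  obtain ⟨d, hd⟩ := dvd_choose_two_of_odd hn
  obtain ⟨m, rfl⟩ : ∃ m, n = m + 1 := Nat.exists_eq_add_of_le' hn.pos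
  rw [hy, prod_range_add_mul_of_sq_eq_zero _ (by rw [mul_pow, ht, zero_mul]), hd]
  push_cast at hnt ⊢
  linear_combination (d * (∏ k ∈ range N, f k) ^ m * y) * hnt

theorem dvd_prod_range_pow_succ_sub {R : Type*} [CommRing R] {p c : ℕ} (hodd : Odd p)
    (hc : 1 ≤ c) (f g : ℕ → R) (hf : ∀ k i : ℕ, f (k + p * i) = f k + i * p * g k) :
    (p : R) ^ (c + 1) ∣ ∏ k ∈ range (p ^ (c + 1)), f k - (∏ k ∈ range (p ^ c), f k) ^ p := by
  rw [← Ideal.mem_span_singleton, ← Ideal.Quotient.eq]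
  set I := Ideal.span {(p : R) ^ (c + 1)}
  have hz : (p : R ⧸ I) ^ (c + 1) = 0 := by
    rw [← map_natCast (Ideal.Quotient.mk I), ← map_pow]
    exact Ideal.Quotient.mk_singleton_self _
  obtain ⟨d, rfl⟩ := Nat.exists_eq_add_of_le' hc
  rw [map_prod, map_pow, map_prod, pow_succ p (d + 1)]
  refine prod_range_mul_eq_pow_of_mul_eq_zero _ (fun k => Ideal.Quotient.mk I (g k))
    (t := (p : R ⧸ I) ^ (d + 1)) ?_ hodd ((pow_succ' _ _).symm.trans hz) fun k i => ?_
  · linear_combination (p : R ⧸ I) ^ d * hz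
  · rw [pow_succ' p d, mul_assoc, hf]
    simp only [map_add, map_mul, map_natCast]
    push_cast
    ring

theorem pow_succ_dvd_pow_sub_pow {R : Type*} [CommRing R] {p c : ℕ} (hc : 1 ≤ c) {x y : R}
    (h : (p : R) ^ c ∣ x - y) : (p : R) ^ (c + 1) ∣ x ^ p - y ^ p := by
  obtain ⟨d, hd⟩ := h
  obtain ⟨e, rfl⟩ := Nat.exists_eq_add_of_le' hc
  obtain ⟨k, hk⟩ := Polynomial.powAddExpansion y ((p : R) ^ (e + 1) * d) p
  refine ⟨y ^ (p - 1) * d + k * (p : R) ^ e * d ^ 2, ?_⟩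
  rw [show x = y + (p : R) ^ (e + 1) * d by linear_combination hd, hk]
  ring

theorem pow_dvd_prod_range_pow_sub {R : Type*} [CommRing R] {p c : ℕ} (hodd : Odd p)
    (f g : ℕ → R) (hf : ∀ k i : ℕ, f (k + p * i) = f k + i * p * g k) {y : R}
    (hy : (p : R) ∣ ∏ k ∈ range p, f k - y) :
    (p : R) ^ (c + 1) ∣ ∏ k ∈ range (p ^ (c + 1)), f k - y ^ p ^ c := by
  induction c with
  | zero => simpa using hy
  | succ c ih =>
    have h := (dvd_prod_range_pow_succ_sub hodd (Nat.le_add_left 1 c) f g hf).add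
      (pow_succ_dvd_pow_sub_pow (Nat.le_add_left 1 c) ih)
    rwa [sub_add_sub_cancel, ← pow_mul, ← pow_succ] at h

end Products

section UnitFactorial

/-- The factor `k` contributes to `unitFactorial p`: `k` itself if `p ∤ k`, and `1` otherwise. -/
def unitPart (p k : ℕ) : ℕ := if p ∣ k then 1 else k

/-- The product of the positive integers up to `m` that are prime to `p`, the `p`-adic unit
that takes the place of the factorial. The factor `k = 0` of the range contributes `1`. -/
def unitFactorial (p m : ℕ) : ℕ := ∏ k ∈ range (m + 1), unitPart p k

variable {p : ℕ}

theorem prod_filter_not_dvd_eq_unitFactorial (p m : ℕ) :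
    ∏ k ∈ Icc 1 m with ¬ p ∣ k, k = unitFactorial p m := by
  rw [unitFactorial, prod_filter, prod_range_succ', range_eq_Ico,
    prod_Ico_add' (unitPart p) 0 m 1]
  simp only [unitPart, ite_not, dvd_zero, if_true, mul_one]
  rfl

theorem unitFactorial_zero (p : ℕ) : unitFactorial p 0 = 1 := by simp [unitFactorial, unitPart]

theorem unitFactorial_succ (p m : ℕ) :
    unitFactorial p (m + 1) = unitFactorial p m * unitPart p (m + 1) := prod_range_succ _ _

theorem unitFactorial_eq_factorial {m : ℕ} (hm : m < p) : unitFactorial p m = m.factorial := by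
  induction m with
  | zero => exact unitFactorial_zero p
  | succ m ih =>
    rw [unitFactorial_succ, ih (by omega), unitPart,
      if_neg (Nat.not_dvd_of_pos_of_lt m.succ_pos hm), Nat.factorial_succ, mul_comm]

theorem unitFactorial_pow_eq_prod_range (p : ℕ) {c : ℕ} (hc : 1 ≤ c) :
    unitFactorial p (p ^ c) = ∏ k ∈ range (p ^ c), unitPart p k := by
  rw [unitFactorial, prod_range_succ, unitPart, if_pos (dvd_pow_self p (by omega)), mul_one]

theorem unitPart_add_mul (p k i : ℕ) :
    (unitPart p (k + p * i) : ℤ) = unitPart p k + i * p * (if p ∣ k then 0 else 1) := by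
  simp only [unitPart, Nat.dvd_add_left (dvd_mul_right p i)]
  split_ifs <;> push_cast <;> ring

theorem prime_dvd_prod_unitPart_add_one [Fact p.Prime] :
    (p : ℤ) ∣ ∏ k ∈ range p, (unitPart p k : ℤ) + 1 := by
  have hp : p - 1 + 1 = p := Nat.sub_add_cancel (NeZero.one_le)
  have h : ∏ k ∈ range p, unitPart p k = (p - 1).factorial := by
    rw [← unitFactorial_eq_factorial (Nat.sub_one_lt (NeZero.ne p)), unitFactorial, hp]
  rw [← Nat.cast_prod, h, ← ZMod.intCast_zmod_eq_zero_iff_dvd]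
  push_cast
  rw [ZMod.wilsons_lemma, neg_add_cancel]

theorem pow_dvd_unitFactorial_pow_add_one [Fact p.Prime] (hodd : Odd p) {c : ℕ} (hc : 1 ≤ c) :
    (p : ℤ) ^ c ∣ unitFactorial p (p ^ c) + 1 := by
  obtain ⟨d, rfl⟩ := Nat.exists_eq_add_of_le' hc
  have h := pow_dvd_prod_range_pow_sub (c := d) hodd (fun k => (unitPart p k : ℤ)) _
    (unitPart_add_mul p) (y := -1) (by simpa using prime_dvd_prod_unitPart_add_one)
  rwa [hodd.pow.neg_one_pow, sub_neg_eq_add, ← Nat.cast_prod,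
    ← unitFactorial_pow_eq_prod_range p hc] at h

theorem unitFactorial_add_pow_modEq [Fact p.Prime] (hodd : Odd p) {c : ℕ} (hc : 1 ≤ c) (m : ℕ) :
    (unitFactorial p (m + p ^ c) : ℤ) ≡ -unitFactorial p m [ZMOD (p : ℤ) ^ c] := by
  induction m with
  | zero =>
    refine (Int.modEq_iff_dvd.2 ?_).symm
    simpa [unitFactorial_zero] using pow_dvd_unitFactorial_pow_add_one hodd hc
  | succ m ih =>
    have h : (unitPart p (m + 1 + p ^ c) : ℤ) ≡ unitPart p (m + 1) [ZMOD (p : ℤ) ^ c] := by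
      obtain ⟨d, rfl⟩ := Nat.exists_eq_add_of_le' hc
      rw [pow_succ' p, unitPart_add_mul]
      refine (Int.modEq_iff_dvd.2 ⟨if p ∣ m + 1 then 0 else 1, ?_⟩).symm
      push_cast
      ring
    rw [unitFactorial_succ, add_right_comm, unitFactorial_succ, add_right_comm m]
    push_cast
    rw [← neg_mul]
    exact ih.mul h

theorem unitFactorial_add_mul_pow_modEq [Fact p.Prime] (hodd : Odd p) {c : ℕ} (hc : 1 ≤ c)
    (m i : ℕ) : (unitFactorial p (m + i * p ^ c) : ℤ) ≡ (-1) ^ i * unitFactorial p m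
      [ZMOD (p : ℤ) ^ c] := by
  induction i with
  | zero => simp [Int.ModEq.refl]
  | succ i ih =>
    rw [add_mul, one_mul, ← add_assoc, pow_succ, mul_neg_one, neg_mul]
    exact (unitFactorial_add_pow_modEq hodd hc _).trans ih.neg

theorem factorial_eq_pow_mul_unitFactorial (p m : ℕ) :
    m.factorial = p ^ (m / p) * (m / p).factorial * unitFactorial p m := by
  induction m with
  | zero => simp [unitFactorial_zero]
  | succ m ih =>
    rw [Nat.factorial_succ, ih, Nat.succ_div, unitFactorial_succ, unitPart]
    split_ifs with h
    · have h2 : m + 1 = p * (m / p + 1) := by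
        rw [← Nat.succ_div_of_dvd h, Nat.mul_div_cancel' h]
      rw [Nat.factorial_succ, pow_succ]
      nth_rewrite 1 [h2]
      ring
    · rw [add_zero]
      ring

end UnitFactorial

section Stirling

theorem sum_neg_one_pow_mul_choose_mul_pow_succ (s N : ℕ) :
    ∑ k ∈ range (N + 2), (-1 : ℤ) ^ k * (N + 1).choose k * (k : ℤ) ^ (s + 1) =
      (N + 1) * (∑ k ∈ range (N + 2), (-1 : ℤ) ^ k * (N + 1).choose k * (k : ℤ) ^ s -
        ∑ k ∈ range (N + 1), (-1 : ℤ) ^ k * N.choose k * (k : ℤ) ^ s) := by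
  have h : ∑ k ∈ range (N + 1), (-1 : ℤ) ^ k * N.choose k * (k : ℤ) ^ s =
      ∑ k ∈ range (N + 2), (-1 : ℤ) ^ k * N.choose k * (k : ℤ) ^ s := by
    simp [sum_range_succ _ (N + 1)]
  rw [h, ← sum_sub_distrib, mul_sum]
  refine sum_congr rfl fun k _ => ?_
  cases k with
  | zero => simp
  | succ k =>
    have habs : ((N : ℤ) + 1) * N.choose k = (N + 1).choose (k + 1) * (k + 1) :=
      mod_cast Nat.add_one_mul_choose_eq N k
    rw [Nat.choose_succ_succ' N k] at habs ⊢
    push_cast at habs ⊢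
    linear_combination (-(-1 : ℤ) ^ (k + 1) * (k + 1 : ℤ) ^ s) * habs

theorem sum_neg_one_pow_mul_choose_mul_pow (s N : ℕ) :
    ∑ k ∈ range (N + 1), (-1 : ℤ) ^ k * N.choose k * (k : ℤ) ^ s =
      (-1) ^ N * N.factorial * Nat.stirlingSecond s N := by
  induction s generalizing N with
  | zero => cases N <;> simp [Int.alternating_sum_range_choose]
  | succ s ih =>
    cases N with
    | zero => simp
    | succ N =>
      rw [sum_neg_one_pow_mul_choose_mul_pow_succ, ih, ih, Nat.stirlingSecond_succ_succ,
        Nat.factorial_succ]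
      push_cast
      ring

section Polynomial

open Polynomial

theorem prod_range_one_sub_zmod (p : ℕ) [Fact p.Prime] :
    ∏ k ∈ range p, (1 - (k : (ZMod p)[X]) * X) = 1 - X ^ (p - 1) := by
  have hp2 : 1 < p := Nat.Prime.one_lt Fact.out
  refine eq_of_natDegree_lt_card_of_eval_eq _ _ (f := fun x : ZMod p => x)
    Function.injective_id (fun x => ?_) ?_
  · rw [eval_prod]
    by_cases hx : x = 0
    · simp [hx, Nat.sub_ne_zero_of_lt hp2]
    · have hroot : (1 - ((x⁻¹.val : ℕ) : (ZMod p)[X]) * X).eval x = 0 := by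
        rw [eval_sub, eval_one, eval_mul, eval_natCast, ZMod.natCast_zmod_val, eval_X,
          inv_mul_cancel₀ hx, sub_self]
      rw [prod_eq_zero (mem_range.2 (ZMod.val_lt x⁻¹)) hroot]
      simp [ZMod.pow_card_sub_one_eq_one hx]
  · have hprod : (∏ k ∈ range p, (1 - (k : (ZMod p)[X]) * X)).natDegree ≤ p - 1 := by
      rw [← prod_erase (range p) (a := 0) (by simp)]
      refine (natDegree_prod_le _ _).trans ?_
      refine (sum_le_card_nsmul _ _ 1 fun k _ => ?_).trans
        (by simp [card_erase_of_mem (mem_range.2 (NeZero.pos p))])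
      rw [← map_natCast C]
      compute_degree
    have hpow : (1 - X ^ (p - 1) : (ZMod p)[X]).natDegree ≤ p - 1 := by compute_degree
    rw [ZMod.card]
    exact (max_le hprod hpow).trans_lt (Nat.sub_one_lt_of_lt hp2)

theorem natCast_dvd_iff_map_zmod_eq_zero {n : ℕ} {f : ℤ[X]} :
    (n : ℤ[X]) ∣ f ↔ f.map (Int.castRingHom (ZMod n)) = 0 := by
  rw [← map_natCast C, C_dvd_iff_dvd_coeff, ext_iff]
  simp [ZMod.intCast_zmod_eq_zero_iff_dvd]

theorem pow_dvd_prod_range_one_sub {p : ℕ} [Fact p.Prime] (hodd : Odd p) (c : ℕ) :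
    (p : ℤ[X]) ^ (c + 1) ∣ ∏ k ∈ range (p ^ (c + 1)), (1 - (k : ℤ[X]) * X) -
      (1 - X ^ (p - 1)) ^ p ^ c := by
  refine pow_dvd_prod_range_pow_sub hodd _ (fun _ => -X)
    (fun k i => by push_cast; ring) ?_
  rw [natCast_dvd_iff_map_zmod_eq_zero]
  simp [Polynomial.map_prod, prod_range_one_sub_zmod]

end Polynomial

open PowerSeries

theorem mk_stirlingSecond_mul_prod_one_sub (R : Type*) [CommRing R] (N : ℕ) :
    (PowerSeries.mk fun s => (Nat.stirlingSecond s N : R)) *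
      ∏ k ∈ range (N + 1), (1 - (k : R⟦X⟧) * X) = X ^ N := by
  induction N with
  | zero =>
    ext s
    cases s <;> simp [coeff_one]
  | succ N ih =>
    have h : (PowerSeries.mk fun s => (Nat.stirlingSecond s (N + 1) : R)) *
        (1 - ((N + 1 : ℕ) : R⟦X⟧) * X) =
        X * PowerSeries.mk fun s => (Nat.stirlingSecond s N : R) := by
      rw [mul_sub, mul_one, mul_left_comm, mul_comm _ X, ← map_natCast (C (R := R)), mul_left_comm]
      ext s
      cases s with
      | zero => simp
      | succ s =>
        rw [map_sub, coeff_succ_X_mul, coeff_succ_X_mul, coeff_C_mul]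
        simp only [coeff_mk, Nat.stirlingSecond_succ_succ]
        push_cast
        ring
    rw [prod_range_succ, mul_comm (∏ k ∈ range (N + 1), _), ← mul_assoc, h, mul_assoc, ih,
      pow_succ']

variable {p : ℕ} [Fact p.Prime]

theorem prod_range_pow_one_sub_zmod (hodd : Odd p) (c : ℕ) :
    ∏ k ∈ range (p ^ (c + 1)), (1 - (k : (ZMod (p ^ (c + 1)))⟦X⟧) * X) =
      (1 - X ^ (p - 1)) ^ p ^ c := by
  have h := pow_dvd_prod_range_one_sub hodd c
  rw [← Nat.cast_pow, natCast_dvd_iff_map_zmod_eq_zero, Polynomial.map_sub, sub_eq_zero] at h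
  have hcast (k : ℕ) : ((k : Polynomial (ZMod (p ^ (c + 1)))) : (ZMod (p ^ (c + 1)))⟦X⟧) = k :=
    map_natCast Polynomial.coeToPowerSeries.ringHom k
  simpa [Polynomial.map_prod, hcast] using
    congrArg (Polynomial.coeToPowerSeries.ringHom (R := ZMod (p ^ (c + 1)))) h

theorem prod_range_mul_pow_one_sub_zmod (hodd : Odd p) (a c : ℕ) :
    ∏ k ∈ range (a * p ^ (c + 1) + 1), (1 - (k : (ZMod (p ^ (c + 1)))⟦X⟧) * X) =
      (1 - X ^ (p - 1)) ^ (a * p ^ c) := by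
  have hz (j : ℕ) : ((j * p ^ (c + 1) : ℕ) : (ZMod (p ^ (c + 1)))⟦X⟧) = 0 := by
    rw [← map_natCast C, Nat.cast_mul, ZMod.natCast_self, mul_zero, map_zero]
  rw [prod_range_succ, hz, zero_mul, sub_zero, mul_one]
  induction a with
  | zero => simp
  | succ a ih =>
    rw [add_one_mul, prod_range_add, ih, add_one_mul a (p ^ c), pow_add _ (a * p ^ c)]
    simp only [Nat.cast_add, hz, zero_add, prod_range_pow_one_sub_zmod hodd]

theorem expand_invOneSubPow_mul (R : Type*) [CommRing R] {n : ℕ} (hn : n ≠ 0) (A : ℕ) :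
    expand n hn (invOneSubPow R A).val * (1 - X ^ n) ^ A = 1 := by
  have h := congrArg (expand n hn) (invOneSubPow R A).val_inv
  rw [invOneSubPow_inv_eq_one_sub_pow] at h
  simpa only [map_mul, map_pow, map_sub, map_one, expand_X] using h

theorem stirlingSecond_mul_pow_zmod (hodd : Odd p) {a : ℕ} (ha : 1 ≤ a) (c m : ℕ) :
    (Nat.stirlingSecond (a * p ^ (c + 1) + m) (a * p ^ (c + 1)) : ZMod (p ^ (c + 1))) =
      if p - 1 ∣ m then
        ((a * p ^ c - 1 + m / (p - 1)).choose (a * p ^ c - 1) : ZMod (p ^ (c + 1)))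
      else 0 := by
  have hp1 : p - 1 ≠ 0 := Nat.sub_ne_zero_of_lt (Nat.Prime.one_lt Fact.out)
  have hA : 0 < a * p ^ c := Nat.mul_pos ha (pow_pos (NeZero.pos p) _)
  have hgen := mk_stirlingSecond_mul_prod_one_sub (ZMod (p ^ (c + 1))) (a * p ^ (c + 1))
  rw [prod_range_mul_pow_one_sub_zmod hodd] at hgen
  have hinv := expand_invOneSubPow_mul (ZMod (p ^ (c + 1))) hp1 (a * p ^ c)
  have hmk : (PowerSeries.mk fun s =>
      (Nat.stirlingSecond s (a * p ^ (c + 1)) : ZMod (p ^ (c + 1)))) =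
      X ^ (a * p ^ (c + 1)) * expand (p - 1) hp1 (invOneSubPow _ (a * p ^ c)).val := by
    rw [← hgen, mul_assoc, mul_comm (_ ^ (a * p ^ c)), hinv, mul_one]
  have h := congrArg (coeff (a * p ^ (c + 1) + m)) hmk
  rw [coeff_mk, add_comm _ m, coeff_X_pow_mul, coeff_expand,
    invOneSubPow_val_eq_mk_sub_one_add_choose_of_pos _ _ hA] at h
  rw [add_comm _ m, h]
  simp

end Stirling

section ResidueSum

open Polynomial

/-- The sum of the coefficients of a polynomial at the exponents congruent to `r` modulo `p`.
It only depends on the class of the polynomial modulo `X ^ p - 1`, and `C_p(n,r)` is its value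
at `(1 - X) ^ n`. -/
noncomputable def residueSum (R : Type*) [CommRing R] (p : ℕ) (r : ℤ) : R[X] →ₗ[R] R :=
  Polynomial.lsum fun k => if ((k : ℤ) - r) % p = 0 then LinearMap.id else 0

variable {R : Type*} [CommRing R] {p : ℕ} {r : ℤ}

theorem residueSum_monomial (k : ℕ) (c : R) :
    residueSum R p r (monomial k c) = if ((k : ℤ) - r) % p = 0 then c else 0 := by
  rw [residueSum, lsum_apply, sum_monomial_index _ _ (by simp)]
  split_ifs <;> simp

theorem residueSum_X_pow_mul (f : R[X]) : residueSum R p r (X ^ p * f) = residueSum R p r f := by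
  induction f using Polynomial.induction_on' with
  | add f g hf hg => rw [mul_add, map_add, hf, hg, map_add]
  | monomial k c =>
    rw [X_pow_mul_monomial, residueSum_monomial, residueSum_monomial, Nat.cast_add,
      add_sub_right_comm, Int.add_emod_right]

theorem residueSum_eq_of_dvd {f g : R[X]} (h : X ^ p - 1 ∣ f - g) :
    residueSum R p r f = residueSum R p r g := by
  obtain ⟨d, hd⟩ := h
  rw [← sub_eq_zero, ← map_sub, hd, sub_mul, map_sub, residueSum_X_pow_mul, one_mul, sub_self]

theorem residueSum_map {S : Type*} [CommRing S] (φ : R →+* S) (f : R[X]) :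
    residueSum S p r (f.map φ) = φ (residueSum R p r f) := by
  induction f using Polynomial.induction_on' with
  | add f g hf hg => simp [hf, hg]
  | monomial k c =>
    rw [map_monomial, residueSum_monomial, residueSum_monomial]
    split_ifs <;> simp

theorem residueSum_geom_sum (hp : p ≠ 0) :
    residueSum R p r (∑ j ∈ range p, X ^ j) = 1 := by
  have hp0 : (p : ℤ) ≠ 0 := Nat.cast_ne_zero.2 hp
  have hr0 := Int.emod_nonneg r hp0
  have hrp := Int.emod_lt_of_pos r (by lia : 0 < (p : ℤ))
  simp only [map_sum, ← monomial_one_right_eq_X_pow, residueSum_monomial,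
    ← Int.emod_eq_emod_iff_emod_sub_eq_zero]
  rw [sum_eq_single_of_mem (r % p).toNat (mem_range.2 (by lia))]
  · rw [if_pos (by rw [Int.toNat_of_nonneg hr0, Int.emod_emod])]
  · intro j hj hne
    have hjp : (j : ℤ) % p = j := Int.emod_eq_of_lt (by lia) (by have := mem_range.1 hj; lia)
    rw [if_neg (by lia)]

theorem residueSum_X_mul_derivative (f : (ZMod p)[X]) :
    residueSum (ZMod p) p r (X * derivative f) = r * residueSum (ZMod p) p r f := by
  induction f using Polynomial.induction_on' with
  | add f g hf hg => rw [derivative_add, mul_add, map_add, hf, hg, map_add, mul_add]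
  | monomial k c =>
    have hX : X * derivative (monomial k c) = monomial k (c * k) := by
      cases k with
      | zero => simp
      | succ k => rw [derivative_monomial, X_mul_monomial, Nat.add_sub_cancel]
    rw [hX, residueSum_monomial, residueSum_monomial]
    split_ifs with h
    · have hkr : ((k - r : ℤ) : ZMod p) = 0 := by
        rw [ZMod.intCast_zmod_eq_zero_iff_dvd]
        exact Int.dvd_of_emod_eq_zero h
      rw [Int.cast_sub, Int.cast_natCast, sub_eq_zero] at hkr
      rw [hkr, mul_comm]
    · rw [mul_zero]

theorem one_sub_X_pow_eq_sum_monomial (N : ℕ) : ((1 - X) ^ N : ℤ[X]) =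
    ∑ k ∈ range (N + 1), monomial k ((-1) ^ k * N.choose k : ℤ) := by
  rw [sub_eq_neg_add, add_pow]
  refine sum_congr rfl fun k _ => ?_
  rw [← C_mul_X_pow_eq_monomial, neg_pow, one_pow, mul_one, C_mul, map_pow, map_neg, C_1,
    C_eq_natCast]
  ring

theorem Cp_eq_residueSum (p N : ℕ) (r : ℤ) :
    Cp p N r = (residueSum ℤ p r ((1 - X) ^ N) : ℤ) := by
  rw [one_sub_X_pow_eq_sum_monomial, map_sum, Cp, Int.cast_sum]
  refine sum_congr rfl fun k _ => ?_
  rw [residueSum_monomial]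
  split_ifs <;> simp

end ResidueSum

section FermatQuotient

open Polynomial

variable {p : ℕ} [Fact p.Prime]

theorem natCast_dvd_pow_sub_expand (f : ℤ[X]) : (p : ℤ[X]) ∣ f ^ p - expand ℤ p f := by
  rw [natCast_dvd_iff_map_zmod_eq_zero]
  simp [map_expand, ZMod.expand_card]

/-- The Fermat quotient `(f ^ p - f(X ^ p)) / p` of an integer polynomial `f`. -/
noncomputable def fermatQuotient (p : ℕ) [Fact p.Prime] (f : ℤ[X]) : ℤ[X] :=
  (natCast_dvd_pow_sub_expand (p := p) f).choose

theorem natCast_mul_fermatQuotient (f : ℤ[X]) :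
    (p : ℤ[X]) * fermatQuotient p f = f ^ p - expand ℤ p f :=
  (natCast_dvd_pow_sub_expand f).choose_spec.symm

theorem eval_one_fermatQuotient {f : ℤ[X]} (hf : f.eval 1 = 1) :
    (fermatQuotient p f).eval 1 = 0 := by
  have h := congrArg (eval 1) (natCast_mul_fermatQuotient (p := p) f)
  simpa [expand_eval, hf, NeZero.ne p] using h

theorem derivative_fermatQuotient (f : ℤ[X]) :
    derivative (fermatQuotient p f) =
      f ^ (p - 1) * derivative f - expand ℤ p (derivative f) * X ^ (p - 1) := by
  have hp0 : (p : ℤ[X]) ≠ 0 := Nat.cast_ne_zero.2 (NeZero.ne p)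
  have h := congrArg derivative (natCast_mul_fermatQuotient (p := p) f)
  rw [← C_eq_natCast, derivative_C_mul, derivative_sub, derivative_pow, derivative_expand,
    C_eq_natCast] at h
  refine mul_left_cancel₀ hp0 ?_
  linear_combination h

theorem X_pow_sub_one_dvd_expand_sub (f : ℤ[X]) (p : ℕ) :
    X ^ p - 1 ∣ expand ℤ p f - C (f.eval 1) := by
  simpa using map_dvd (expand ℤ p) (X_sub_C_dvd_sub_C_eval : X - C 1 ∣ f - C (f.eval 1))

theorem pow_add_two_dvd_one_add_mul_pow_sub (hodd : Odd p) {S : Type*} [CommRing S] (s : S)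
    (c d : ℕ) :
    (p : S) ^ (c + 2) ∣ (1 + p * s) ^ (p ^ c * d) - (1 + (p : S) ^ (c + 1) * d * s) := by
  have hp : p.Prime := Fact.out
  have hdvd : (p * p * p : S) ∣ (p : S) ^ p := by
    simpa [pow_succ] using pow_dvd_pow (p : S) (hp.odd_iff.1 hodd)
  obtain ⟨y, hy⟩ := ZMod.exists_one_add_mul_pow_prime_pow_eq hp dvd_rfl hdvd s c
  obtain ⟨k, hk⟩ := powAddExpansion (1 : S) ((p : S) ^ c * p * (s + p * y)) d
  refine ⟨d * y + k * (p : S) ^ c * (s + p * y) ^ 2, ?_⟩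
  rw [pow_mul, hy, hk]
  ring

theorem residueSum_mul_pow_add_modEq (hodd : Odd p) {f : ℤ[X]} (hf : f.eval 1 = 1) (g : ℤ[X])
    (c e d : ℕ) (r : ℤ) :
    residueSum ℤ p r (g * f ^ (e + p ^ (c + 1) * d)) ≡
      residueSum ℤ p r (g * f ^ e) +
        (p : ℤ) ^ (c + 1) * d * residueSum ℤ p r (g * f ^ e * fermatQuotient p f)
        [ZMOD (p : ℤ) ^ (c + 2)] := by
  set π := Ideal.Quotient.mk (Ideal.span {(X ^ p - 1 : ℤ[X])})
  have hu : π f ^ p = 1 + p * π (fermatQuotient p f) := by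
    have hexp : π (expand ℤ p f) = π 1 := by
      rw [Ideal.Quotient.eq, Ideal.mem_span_singleton]
      simpa [hf] using X_pow_sub_one_dvd_expand_sub f p
    have h := congrArg π (natCast_mul_fermatQuotient (p := p) f)
    rw [map_mul, map_sub, map_pow, hexp, map_natCast, map_one] at h
    linear_combination -h
  obtain ⟨h, hh⟩ := pow_add_two_dvd_one_add_mul_pow_sub hodd (π (fermatQuotient p f)) c d
  obtain ⟨h, rfl⟩ := Ideal.Quotient.mk_surjective h
  rw [← hu, ← pow_mul, ← mul_assoc, ← pow_succ'] at hh
  have hsum : residueSum ℤ p r (g * f ^ (e + p ^ (c + 1) * d)) =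
      residueSum ℤ p r (g * f ^ e + ((p : ℤ) ^ (c + 1) * d) • (g * f ^ e * fermatQuotient p f)
        + ((p : ℤ) ^ (c + 2)) • (g * f ^ e * h)) := by
    refine residueSum_eq_of_dvd (Ideal.mem_span_singleton.1 (Ideal.Quotient.eq.1 ?_))
    simp only [zsmul_eq_mul, map_mul, map_add, map_pow, pow_add, Int.cast_mul, Int.cast_pow,
      Int.cast_natCast, map_natCast] at hh ⊢
    linear_combination π g * π f ^ e * hh
  rw [hsum, map_add, map_add, map_smul, map_smul]
  refine (Int.modEq_iff_dvd.2 ⟨residueSum ℤ p r (g * f ^ e * h), ?_⟩).symm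
  simp only [smul_eq_mul]
  ring

theorem residueSum_mul_pow_modEq (hodd : Odd p) {f : ℤ[X]} (hf : f.eval 1 = 1) (g : ℤ[X])
    {c e e' : ℕ} (h : e ≡ e' [MOD p ^ (c + 1)]) (r : ℤ) :
    residueSum ℤ p r (g * f ^ e) ≡
      residueSum ℤ p r (g * f ^ e') +
        (e - e') * residueSum ℤ p r (g * f ^ e' * fermatQuotient p f)
        [ZMOD (p : ℤ) ^ (c + 2)] := by
  rcases le_total e' e with hle | hle
  · obtain ⟨d, hd⟩ := (Nat.modEq_iff_dvd' hle).1 h.symm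
    obtain rfl : e = e' + p ^ (c + 1) * d := by omega
    convert residueSum_mul_pow_add_modEq hodd hf g c e' d r using 2
    push_cast
    ring
  · obtain ⟨d, hd⟩ := (Nat.modEq_iff_dvd' hle).1 h
    obtain rfl : e' = e + p ^ (c + 1) * d := by omega
    have hq := residueSum_mul_pow_add_modEq hodd hf (g * fermatQuotient p f) c e d r
    simp only [mul_right_comm g (fermatQuotient p f)] at hq
    obtain ⟨y, hy⟩ := Int.modEq_iff_dvd.1 (residueSum_mul_pow_add_modEq hodd hf g c e d r)
    obtain ⟨z, hz⟩ := Int.modEq_iff_dvd.1 hq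
    set Q := residueSum ℤ p r (g * f ^ e * fermatQuotient p f * fermatQuotient p f)
    refine Int.modEq_iff_dvd.2 ⟨-y + p ^ (c + 1) * d * z - p ^ c * d ^ 2 * Q, ?_⟩
    push_cast
    linear_combination -hy + p ^ (c + 1) * d * hz

end FermatQuotient

section FleckUnit

open Polynomial

variable {p : ℕ} [Fact p.Prime]

theorem one_sub_X_pow_sub_one_zmod :
    ((1 - X) ^ (p - 1) : (ZMod p)[X]) = ∑ j ∈ range p, X ^ j := by
  have hX : (1 - X : (ZMod p)[X]) ≠ 0 := fun h => by simpa using congrArg (eval 0) h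
  have hp : p - 1 + 1 = p := Nat.sub_add_cancel NeZero.one_le
  refine mul_left_cancel₀ hX ?_
  rw [mul_neg_geom_sum, ← pow_succ', hp, sub_pow_char, one_pow]

theorem natCast_dvd_geom_sum_sub_one_sub_X_pow :
    (p : ℤ[X]) ∣ ∑ j ∈ range p, X ^ j - (1 - X) ^ (p - 1) := by
  rw [natCast_dvd_iff_map_zmod_eq_zero]
  simp [one_sub_X_pow_sub_one_zmod, Polynomial.map_sum]

/-- The polynomial `U` with `p * U = 1 + X + ⋯ + X ^ (p - 1) - (1 - X) ^ (p - 1)`. Modulo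
`X ^ p - 1`, the power `(1 - X) ^ p` is `-p * (1 - X) * U`, so that the Fleck quotients are the
residue sums of the polynomials `(1 - X) ^ a * U ^ e`. -/
noncomputable def fleckUnit (p : ℕ) [Fact p.Prime] : ℤ[X] :=
  (natCast_dvd_geom_sum_sub_one_sub_X_pow (p := p)).choose

theorem natCast_mul_fleckUnit :
    (p : ℤ[X]) * fleckUnit p = ∑ j ∈ range p, X ^ j - (1 - X) ^ (p - 1) :=
  natCast_dvd_geom_sum_sub_one_sub_X_pow.choose_spec.symm

theorem one_sub_X_pow_eq_sub_fleckUnit (p : ℕ) [Fact p.Prime] :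
    ((1 - X) ^ p : ℤ[X]) = 1 - X ^ p - (p : ℤ[X]) * ((1 - X) * fleckUnit p) := by
  have hp : p - 1 + 1 = p := Nat.sub_add_cancel NeZero.one_le
  have hpow : ((1 - X) ^ p : ℤ[X]) = (1 - X) * (1 - X) ^ (p - 1) := by rw [← pow_succ', hp]
  rw [mul_left_comm, natCast_mul_fleckUnit, mul_sub, mul_neg_geom_sum, hpow]
  ring

theorem X_pow_sub_one_dvd_one_sub_X_pow_sub {a : ℕ} (ha : 1 ≤ a) (e : ℕ) :
    (X ^ p - 1 : ℤ[X]) ∣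
      (1 - X) ^ (a + (p - 1) * e) - (-(p : ℤ[X])) ^ e * ((1 - X) ^ a * fleckUnit p ^ e) := by
  have hp : p - 1 + 1 = p := Nat.sub_add_cancel NeZero.one_le
  have hpow : ((1 - X) ^ p : ℤ[X]) = (1 - X) ^ (p - 1) * (1 - X) := by rw [← pow_succ, hp]
  obtain ⟨a, rfl⟩ := Nat.exists_eq_add_of_le' ha
  induction e with
  | zero => simp
  | succ e ih =>
    obtain ⟨d, hd⟩ := ih
    refine ⟨(1 - X) ^ (p - 1) * d - (-(p : ℤ[X])) ^ e * ((1 - X) ^ a * fleckUnit p ^ e), ?_⟩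
    rw [mul_add, mul_one, ← add_assoc, pow_add _ _ (p - 1)]
    linear_combination (1 - X) ^ (p - 1) * hd + (-(p : ℤ[X])) ^ e * (1 - X) ^ a *
      fleckUnit p ^ e * (one_sub_X_pow_eq_sub_fleckUnit p - hpow)

theorem derivative_one_sub_X_mul_fleckUnit (p : ℕ) [Fact p.Prime] :
    derivative ((1 - X) * fleckUnit p) = (1 - X) ^ (p - 1) - X ^ (p - 1) := by
  have hp0 : (p : ℤ[X]) ≠ 0 := Nat.cast_ne_zero.2 (NeZero.ne p)
  have h := congrArg derivative (one_sub_X_pow_eq_sub_fleckUnit p)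
  rw [← C_eq_natCast, derivative_sub, derivative_C_mul, derivative_pow] at h
  simp only [map_natCast, derivative_sub, derivative_one, derivative_X, zero_sub,
    derivative_X_pow] at h
  refine mul_left_cancel₀ hp0 ?_
  linear_combination h

theorem eval_one_fleckUnit (p : ℕ) [Fact p.Prime] : (fleckUnit p).eval 1 = 1 := by
  have hp1 : p - 1 ≠ 0 := Nat.sub_ne_zero_of_lt (Nat.Prime.one_lt Fact.out)
  simpa [derivative_mul, hp1] using congrArg (eval 1) (derivative_one_sub_X_mul_fleckUnit p)

theorem two_mul_eval_one_derivative_fleckUnit (hodd : Odd p) :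
    2 * (derivative (fleckUnit p)).eval 1 = p - 1 := by
  have hp : p.Prime := Fact.out
  have hp3 : 3 ≤ p := hp.odd_iff.1 hodd
  have hp1 : p - 1 - 1 ≠ 0 := by omega
  have h := congrArg (fun f => (derivative f).eval 1) (derivative_one_sub_X_mul_fleckUnit p)
  simp only [derivative_mul, derivative_sub, derivative_one, derivative_X, derivative_pow,
    derivative_add, derivative_zero, eval_add, eval_sub, eval_mul, eval_pow, eval_X, eval_one,
    eval_zero, eval_C, Nat.cast_sub hp.one_lt.le, sub_self, zero_pow hp1] at h
  push_cast at h
  linear_combination -h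

end FleckUnit

section Repdigit

/-- The number `a * (1 + p + ⋯ + p ^ (i - 1))`, whose `i` digits in base `p` are all equal to `a`
when `a < p`. -/
def repdigit (p a i : ℕ) : ℕ := a * ∑ l ∈ range i, p ^ l

variable {p : ℕ}

theorem repdigit_zero (p a : ℕ) : repdigit p a 0 = 0 := by simp [repdigit]

theorem repdigit_succ (p a i : ℕ) : repdigit p a (i + 1) = repdigit p a i + a * p ^ i := by
  rw [repdigit, repdigit, sum_range_succ, mul_add]

theorem repdigit_succ' (p a i : ℕ) : repdigit p a (i + 1) = p * repdigit p a i + a := by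
  rw [repdigit, repdigit, sum_range_succ', mul_add]
  simp only [pow_succ', ← mul_sum, pow_zero, mul_one]
  ring

theorem repdigit_add (p a i j : ℕ) :
    repdigit p a (i + j) = repdigit p a i + repdigit p a j * p ^ i := by
  induction j with
  | zero => simp [repdigit_zero]
  | succ j ih => rw [← add_assoc, repdigit_succ, ih, repdigit_succ, pow_add]; ring

theorem sub_one_mul_repdigit_add (hp : 1 ≤ p) (a i : ℕ) :
    (p - 1) * repdigit p a i + a = a * p ^ i := by
  obtain ⟨m, rfl⟩ := Nat.exists_eq_add_of_le' hp
  induction i with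
  | zero => simp [repdigit_zero]
  | succ i ih =>
    rw [repdigit_succ, pow_succ, mul_add]
    simp only [Nat.add_sub_cancel] at ih ⊢
    linear_combination ih

theorem le_repdigit {a : ℕ} (hp : 1 ≤ p) (ha : 1 ≤ a) (i : ℕ) : i ≤ repdigit p a i :=
  calc i = ∑ l ∈ range i, 1 := by simp
    _ ≤ ∑ l ∈ range i, p ^ l := sum_le_sum fun l _ => Nat.one_le_pow _ _ hp
    _ ≤ repdigit p a i := Nat.le_mul_of_pos_left _ ha

theorem neg_one_pow_repdigit {R : Type*} [CommRing R] (hodd : Odd p) (a i : ℕ) :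
    (-1 : R) ^ repdigit p a i = (-1) ^ (a * i) := by
  induction i with
  | zero => simp [repdigit_zero]
  | succ i ih =>
    rw [repdigit_succ, pow_add, ih, mul_comm a (p ^ i), pow_mul (-1) (p ^ i),
      hodd.pow.neg_one_pow, mul_add, pow_add, mul_one]

theorem factorial_pow_mul (hp : 0 < p) (m i : ℕ) :
    (p ^ i * m).factorial =
      p ^ repdigit p m i * m.factorial * ∏ l ∈ range i, unitFactorial p (p ^ (l + 1) * m) := by
  induction i with
  | zero => simp [repdigit_zero]
  | succ i ih =>
    have hdiv : p ^ (i + 1) * m / p = p ^ i * m := by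
      rw [pow_succ', mul_assoc, Nat.mul_div_cancel_left _ hp]
    rw [factorial_eq_pow_mul_unitFactorial p, hdiv, ih, repdigit_succ,
      pow_add p (repdigit p m i), prod_range_succ, mul_comm m (p ^ i)]
    ring

theorem choose_mul_prod_unitFactorial {a : ℕ} (ha : a < p) (m i : ℕ) :
    (a * p ^ i).factorial * (p ^ i * (p * m + a)).choose (a * p ^ i) *
        ∏ l ∈ range (i + 1), unitFactorial p (p ^ (l + 1) * m) =
      p ^ repdigit p a i * ∏ l ∈ range (i + 1), unitFactorial p (p ^ l * (p * m + a)) := by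
  have hp : 0 < p := by omega
  have hchoose := Nat.add_choose_mul_factorial_mul_factorial (p ^ (i + 1) * m) (a * p ^ i)
  rw [show p ^ (i + 1) * m + a * p ^ i = p ^ i * (p * m + a) by ring] at hchoose
  have hdiv : (p * m + a) / p = m := by
    rw [Nat.mul_add_div hp, Nat.div_eq_of_lt ha, add_zero]
  have hexp : repdigit p (p * m + a) i + m = repdigit p m (i + 1) + repdigit p a i := by
    rw [repdigit_succ']
    simp only [repdigit]
    ring
  refine Nat.eq_of_mul_eq_mul_left
    (mul_pos (pow_pos hp (repdigit p m (i + 1))) (Nat.factorial_pos m)) ?_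
  calc _ = (p ^ i * (p * m + a)).choose (a * p ^ i) * (p ^ (i + 1) * m).factorial *
        (a * p ^ i).factorial := by rw [factorial_pow_mul hp m (i + 1)]; ring
    _ = p ^ repdigit p (p * m + a) i * p ^ m * m.factorial *
        ((∏ l ∈ range i, unitFactorial p (p ^ (l + 1) * (p * m + a))) *
          unitFactorial p (p * m + a)) := by
      rw [hchoose, factorial_pow_mul hp (p * m + a) i,
        factorial_eq_pow_mul_unitFactorial p (p * m + a), hdiv]
      ring
    _ = _ := by rw [← pow_add, hexp, pow_add, prod_range_succ' _ i, pow_zero, one_mul]; ring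

theorem coprime_unitFactorial (hp : p.Prime) (m : ℕ) : p.Coprime (unitFactorial p m) := by
  refine Nat.Coprime.prod_right fun k _ => ?_
  rw [unitPart]
  split_ifs with h
  · exact Nat.coprime_one_right p
  · exact (Nat.Prime.coprime_iff_not_dvd hp).2 h

variable [Fact p.Prime] {c : ℕ}

theorem isUnit_prod_unitFactorial_zmod (s : Finset ℕ) (f : ℕ → ℕ) :
    IsUnit (∏ l ∈ s, (unitFactorial p (f l) : ZMod (p ^ c))) := by
  rw [← Nat.cast_prod, ZMod.isUnit_iff_coprime]
  exact ((Nat.Coprime.prod_right fun l _ => coprime_unitFactorial Fact.out _).pow_left c).symm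

theorem unitFactorial_add_mul_pow_zmod (hodd : Odd p) (hc : 1 ≤ c) (m i : ℕ) :
    (unitFactorial p (m + i * p ^ c) : ZMod (p ^ c)) = (-1) ^ i * unitFactorial p m := by
  have h := unitFactorial_add_mul_pow_modEq hodd hc m i
  rw [← Nat.cast_pow, ← ZMod.intCast_eq_intCast_iff] at h
  push_cast at h
  exact h

theorem unitFactorial_mul_pow_zmod (hodd : Odd p) (hc : 1 ≤ c) (i : ℕ) :
    (unitFactorial p (i * p ^ c) : ZMod (p ^ c)) = (-1) ^ i := by
  simpa [unitFactorial_zero] using unitFactorial_add_mul_pow_zmod hodd hc 0 i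

theorem unitFactorial_pow_mul_repdigit_succ_zmod (hodd : Odd p) (hc : 1 ≤ c) (a k l : ℕ) :
    (unitFactorial p (p ^ l * repdigit p a (c + k + 1)) : ZMod (p ^ c)) =
      (-1) ^ a * unitFactorial p (p ^ l * repdigit p a (c + k)) := by
  have h : p ^ l * repdigit p a (c + k + 1) =
      p ^ l * repdigit p a (c + k) + p ^ (l + k) * a * p ^ c := by
    rw [repdigit_succ]
    ring
  rw [h, unitFactorial_add_mul_pow_zmod hodd hc, pow_mul, hodd.pow.neg_one_pow]

theorem prod_unitFactorial_repdigit_zmod (hodd : Odd p) (hc : 1 ≤ c) (a k : ℕ) :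
    ∏ l ∈ range c, (unitFactorial p (p ^ l * repdigit p a (c + k + 1)) : ZMod (p ^ c)) =
      (∏ l ∈ range c, (unitFactorial p (p ^ (l + 1) * repdigit p a (c + k)) : ZMod (p ^ c))) *
        unitFactorial p (repdigit p a c) := by
  set ε : ℕ → ZMod (p ^ c) := fun i => (-1) ^ (a * i)
  have hsq : ∀ i, ε i * ε i = 1 := fun i => by rw [← mul_pow, neg_mul_neg, one_mul, one_pow]
  have hε : (-1 : ZMod (p ^ c)) ^ (a * (c + k)) = ε c * ε k := by rw [← pow_add, ← mul_add]
  have hshift : (∏ l ∈ range c, (unitFactorial p (p ^ l * repdigit p a (c + k)) : ZMod (p ^ c))) *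
      unitFactorial p (p ^ c * repdigit p a (c + k)) =
      (∏ l ∈ range c, (unitFactorial p (p ^ (l + 1) * repdigit p a (c + k)) : ZMod (p ^ c))) *
        unitFactorial p (repdigit p a (c + k)) := by
    rw [← prod_range_succ
        (fun l => (unitFactorial p (p ^ l * repdigit p a (c + k)) : ZMod (p ^ c))),
      prod_range_succ', pow_zero, one_mul]
  rw [mul_comm (p ^ c), unitFactorial_mul_pow_zmod hodd hc, neg_one_pow_repdigit hodd, hε,
    repdigit_add, unitFactorial_add_mul_pow_zmod hodd hc, neg_one_pow_repdigit hodd,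
    ← repdigit_add] at hshift
  simp only [unitFactorial_pow_mul_repdigit_succ_zmod hodd hc, prod_mul_distrib, prod_const,
    card_range, ← pow_mul]
  linear_combination ε k * hshift -
    ε c * (∏ l ∈ range c, (unitFactorial p (p ^ l * repdigit p a (c + k)) : ZMod (p ^ c))) * hsq k +
    (∏ l ∈ range c, (unitFactorial p (p ^ (l + 1) * repdigit p a (c + k)) : ZMod (p ^ c))) *
      unitFactorial p (repdigit p a c) * hsq k

theorem mul_choose_repdigit_zmod (hodd : Odd p) {a i D : ℕ} (ha : a < p) (hD : i + 1 ≤ D)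
    {K : ℕ} (hK : (a * p ^ (i + 1)).factorial = p ^ repdigit p a (i + 1) * K) :
    (K * (p ^ i * repdigit p a (D + 1)).choose (a * p ^ i) : ZMod (p ^ (i + 1))) =
      (-1) ^ a * unitFactorial p (repdigit p a (i + 1)) := by
  have hp : 0 < p := by omega
  have hc : 1 ≤ i + 1 := by omega
  have hdiv : a * p ^ (i + 1) / p = a * p ^ i := by
    rw [pow_succ, ← mul_assoc, Nat.mul_div_cancel _ hp]
  have hfac : p ^ repdigit p a i * K =
      (a * p ^ i).factorial * unitFactorial p (a * p ^ (i + 1)) := by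
    rw [factorial_eq_pow_mul_unitFactorial p, hdiv, repdigit_succ,
      pow_add p (repdigit p a i)] at hK
    refine Nat.eq_of_mul_eq_mul_left (pow_pos hp (a * p ^ i)) ?_
    rw [← mul_assoc, ← mul_assoc, hK]
    ring
  have key : K * (p ^ i * repdigit p a (D + 1)).choose (a * p ^ i) *
      ∏ l ∈ range (i + 1), unitFactorial p (p ^ (l + 1) * repdigit p a D) =
      unitFactorial p (a * p ^ (i + 1)) *
        ∏ l ∈ range (i + 1), unitFactorial p (p ^ l * repdigit p a (D + 1)) := by
    have h := choose_mul_prod_unitFactorial ha (repdigit p a D) i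
    rw [← repdigit_succ'] at h
    refine Nat.eq_of_mul_eq_mul_left (pow_pos hp (repdigit p a i)) ?_
    calc _ = p ^ repdigit p a i * K * (p ^ i * repdigit p a (D + 1)).choose (a * p ^ i) *
          ∏ l ∈ range (i + 1), unitFactorial p (p ^ (l + 1) * repdigit p a D) := by ring
      _ = _ := by rw [hfac, mul_left_comm, ← h]; ring
  obtain ⟨k, rfl⟩ := Nat.exists_eq_add_of_le hD
  refine (isUnit_prod_unitFactorial_zmod (range (i + 1))
    (fun l => p ^ (l + 1) * repdigit p a (i + 1 + k))).mul_right_cancel ?_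
  have h := congrArg (Nat.cast : ℕ → ZMod (p ^ (i + 1))) key
  push_cast at h
  rw [unitFactorial_mul_pow_zmod hodd hc, prod_unitFactorial_repdigit_zmod hodd hc a k] at h
  rw [h]
  ring

end Repdigit

section FleckQuotientRepdigit

open Polynomial

variable {p : ℕ}

theorem pow_prime_pow_modEq {x y : ℤ} (h : (p : ℤ) ∣ x - y) (B : ℕ) :
    x ^ p ^ B ≡ y ^ p ^ B [ZMOD (p : ℤ) ^ (B + 1)] :=
  (Int.modEq_iff_dvd.2 (dvd_sub_pow_of_dvd_sub h B)).symm

variable [Fact p.Prime]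

theorem prime_dvd_pow_sub_one_sub_one {x : ℤ} (h : ¬ (p : ℤ) ∣ x) : (p : ℤ) ∣ x ^ (p - 1) - 1 := by
  rw [← ZMod.intCast_zmod_eq_zero_iff_dvd] at h ⊢
  push_cast
  rw [ZMod.pow_card_sub_one_eq_one h, sub_self]

theorem pow_prime_pow_pow_sub_one_modEq_one {x : ℤ} (h : ¬ (p : ℤ) ∣ x) (B : ℕ) :
    (x ^ p ^ B) ^ (p - 1) ≡ 1 [ZMOD (p : ℤ) ^ (B + 1)] := by
  rw [pow_right_comm]
  simpa using pow_prime_pow_modEq (prime_dvd_pow_sub_one_sub_one h) B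

theorem geom_sum₂_pow_prime_pow_modEq_zero {k r : ℤ} (hk : ¬ (p : ℤ) ∣ k) (hr : ¬ (p : ℤ) ∣ r)
    (hkr : ¬ (p : ℤ) ∣ k - r) (B : ℕ) :
    ∑ i ∈ range (p - 1), (k ^ p ^ B) ^ i * (r ^ p ^ B) ^ (p - 1 - 1 - i) ≡ 0
      [ZMOD (p : ℤ) ^ (B + 1)] := by
  have hcop : IsCoprime ((p : ℤ) ^ (B + 1)) (k ^ p ^ B - r ^ p ^ B) := by
    refine IsCoprime.pow_left ?_
    rwa [Prime.coprime_iff_not_dvd (Nat.prime_iff_prime_int.1 Fact.out),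
      ← ZMod.intCast_zmod_eq_zero_iff_dvd, Int.cast_sub, Int.cast_pow, Int.cast_pow,
      ZMod.pow_card_pow, ZMod.pow_card_pow, ← Int.cast_sub, ZMod.intCast_zmod_eq_zero_iff_dvd]
  refine Int.modEq_zero_iff_dvd.2 (hcop.dvd_of_dvd_mul_right ?_)
  rw [geom_sum₂_mul]
  exact ((pow_prime_pow_pow_sub_one_modEq_one hr B).trans
    (pow_prime_pow_pow_sub_one_modEq_one hk B).symm).dvd

theorem pow_mul_geom_sum₂_self_modEq {r : ℤ} (hr : ¬ (p : ℤ) ∣ r) (B : ℕ) :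
    r ^ p ^ B * ∑ i ∈ range (p - 1), (r ^ p ^ B) ^ i * (r ^ p ^ B) ^ (p - 1 - 1 - i) ≡ p - 1
      [ZMOD (p : ℤ) ^ (B + 1)] := by
  have hp : 1 < p := Nat.Prime.one_lt Fact.out
  rw [geom_sum₂_self, mul_left_comm, ← pow_succ', Nat.sub_add_cancel (Nat.sub_pos_of_lt hp),
    Nat.cast_sub hp.le, Nat.cast_one]
  simpa using (pow_prime_pow_pow_sub_one_modEq_one hr B).mul_left (p - 1 : ℤ)

theorem sum_pow_mul_pow_modEq_ite {r : ℤ} (hr : ¬ (p : ℤ) ∣ r) (B : ℕ) (k : ℤ) :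
    ∑ i ∈ range (p - 1), k ^ ((i + 1) * p ^ B) * r ^ ((p - 1 - 1 - i) * p ^ B) ≡
      (if (k - r) % p = 0 then (p - 1 : ℤ) else 0) [ZMOD (p : ℤ) ^ (B + 1)] := by
  have hsum : ∑ i ∈ range (p - 1), k ^ ((i + 1) * p ^ B) * r ^ ((p - 1 - 1 - i) * p ^ B) =
      k ^ p ^ B * ∑ i ∈ range (p - 1), (k ^ p ^ B) ^ i * (r ^ p ^ B) ^ (p - 1 - 1 - i) := by
    rw [mul_sum]
    refine sum_congr rfl fun i _ => ?_
    rw [mul_comm (i + 1), mul_comm _ (p ^ B), pow_mul, pow_mul, pow_succ', mul_assoc]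
  rw [hsum]
  split_ifs with hkr
  · have h := pow_prime_pow_modEq (Int.dvd_of_emod_eq_zero hkr) B
    exact (h.mul (Int.ModEq.sum fun i _ => (h.pow i).mul_right _)).trans
      (pow_mul_geom_sum₂_self_modEq hr B)
  · rw [← Int.dvd_iff_emod_eq_zero] at hkr
    by_cases hk : (p : ℤ) ∣ k
    · have hB : B + 1 ≤ p ^ B := Nat.lt_pow_self (Nat.Prime.one_lt Fact.out)
      exact Int.modEq_zero_iff_dvd.2
        (((pow_dvd_pow _ hB).trans (pow_dvd_pow_of_dvd hk _)).mul_right _)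
    · simpa using (geom_sum₂_pow_prime_pow_modEq_zero hk hr hkr B).mul_left (k ^ p ^ B)

theorem sub_one_mul_residueSum_modEq {r : ℤ} (hr : ¬ (p : ℤ) ∣ r) (B N : ℕ) :
    (p - 1 : ℤ) * residueSum ℤ p r ((1 - X) ^ N) ≡ (-1) ^ N * N.factorial *
      ∑ i ∈ range (p - 1), r ^ ((p - 1 - 1 - i) * p ^ B) *
        Nat.stirlingSecond ((i + 1) * p ^ B) N [ZMOD (p : ℤ) ^ (B + 1)] := by
  have hstirling : (-1 : ℤ) ^ N * N.factorial *
      ∑ i ∈ range (p - 1), r ^ ((p - 1 - 1 - i) * p ^ B) *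
        Nat.stirlingSecond ((i + 1) * p ^ B) N = ∑ k ∈ range (N + 1), (-1 : ℤ) ^ k * N.choose k *
      ∑ i ∈ range (p - 1), (k : ℤ) ^ ((i + 1) * p ^ B) * r ^ ((p - 1 - 1 - i) * p ^ B) := by
    simp only [mul_sum]
    rw [sum_comm]
    refine sum_congr rfl fun i _ => ?_
    rw [mul_left_comm, ← sum_neg_one_pow_mul_choose_mul_pow, mul_sum]
    exact sum_congr rfl fun k _ => by ring
  rw [hstirling, one_sub_X_pow_eq_sum_monomial, map_sum, mul_sum]
  refine Int.ModEq.sum fun k _ => ?_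
  convert (sum_pow_mul_pow_modEq_ite hr B k).symm.mul_left ((-1 : ℤ) ^ k * N.choose k) using 1
  rw [residueSum_monomial]
  split_ifs <;> ring

theorem residueSum_one_sub_X_pow {a : ℕ} (ha : 1 ≤ a) (e : ℕ) (r : ℤ) :
    residueSum ℤ p r ((1 - X) ^ (a + (p - 1) * e)) =
      (-(p : ℤ)) ^ e * residueSum ℤ p r ((1 - X) ^ a * fleckUnit p ^ e) := by
  have h : ((-(p : ℤ[X])) ^ e * ((1 - X) ^ a * fleckUnit p ^ e)) =
      ((-(p : ℤ)) ^ e) • ((1 - X) ^ a * fleckUnit p ^ e) := by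
    rw [smul_eq_C_mul, C_pow, C_neg, C_eq_natCast]
  rw [residueSum_eq_of_dvd (X_pow_sub_one_dvd_one_sub_X_pow_sub ha e), h, LinearMap.map_smul,
    smul_eq_mul]

theorem sub_one_mul_residueSum_fleckUnit_modEq (hodd : Odd p) {a : ℕ} (ha : 1 ≤ a) {c B K : ℕ}
    (hK : (a * p ^ c).factorial = p ^ repdigit p a c * K) (hB : repdigit p a c + c ≤ B + 1)
    {r : ℤ} (hr : ¬ (p : ℤ) ∣ r) :
    (p - 1) * (-1) ^ repdigit p a c *
        residueSum ℤ p r ((1 - X) ^ a * fleckUnit p ^ repdigit p a c) ≡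
      (-1) ^ a * K * ∑ i ∈ range (p - 1), r ^ ((p - 1 - 1 - i) * p ^ B) *
        Nat.stirlingSecond ((i + 1) * p ^ B) (a * p ^ c) [ZMOD (p : ℤ) ^ c] := by
  have hpM : (p : ℤ) ^ repdigit p a c ≠ 0 := pow_ne_zero _ (Nat.cast_ne_zero.2 (NeZero.ne p))
  have h := (sub_one_mul_residueSum_modEq hr B (a * p ^ c)).of_dvd (pow_dvd_pow (p : ℤ) hB)
  rw [← sub_one_mul_repdigit_add NeZero.one_le a c, add_comm _ a, residueSum_one_sub_X_pow ha,
    add_comm a, sub_one_mul_repdigit_add NeZero.one_le, hK, neg_pow (p : ℤ), mul_comm a,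
    pow_mul (-1 : ℤ), hodd.pow.neg_one_pow, pow_add] at h
  refine Int.modEq_iff_dvd.2 ((mul_dvd_mul_iff_left hpM).1 (h.dvd.trans (dvd_of_eq ?_)))
  rw [mul_comm a]
  push_cast
  ring

theorem mul_prime_pow_modEq_sub_one (x j : ℕ) : x * p ^ j ≡ x [MOD (p - 1)] := by
  have hp : p ≡ 1 [MOD (p - 1)] := ((Nat.modEq_iff_dvd' NeZero.one_le).2 dvd_rfl).symm
  simpa using (hp.pow j).mul_left x

theorem sub_one_dvd_iff_of_mul_pow_eq {a i m B c : ℕ} (h : (i + 1) * p ^ B = a * p ^ c + m) :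
    p - 1 ∣ m ↔ i + 1 ≡ a [MOD (p - 1)] := by
  have hsum : i + 1 ≡ a + m [MOD (p - 1)] :=
    (mul_prime_pow_modEq_sub_one _ B).symm.trans
      (h ▸ (mul_prime_pow_modEq_sub_one a c).add_right m)
  rw [← Nat.modEq_zero_iff_dvd]
  refine ⟨fun hm => hsum.trans (hm.add_left a), fun hi => ?_⟩
  exact Nat.ModEq.add_left_cancel' a (hsum.symm.trans hi)

theorem sum_pow_mul_stirlingSecond_zmod (hodd : Odd p) {a : ℕ} (ha : 1 ≤ a) (hap : a < p - 1)
    {c D : ℕ} (hD : 1 ≤ D) (r : ZMod (p ^ (c + 1))) :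
    ∑ i ∈ range (p - 1), r ^ ((p - 1 - 1 - i) * p ^ (c + 1 + D)) *
        (Nat.stirlingSecond ((i + 1) * p ^ (c + 1 + D)) (a * p ^ (c + 1)) : ZMod (p ^ (c + 1))) =
      r ^ ((p - 1 - a) * p ^ (c + 1 + D)) *
        ((a * p ^ c - 1 + p ^ (c + 1) * repdigit p a D).choose (a * p ^ c - 1) :) := by
  have hp : p.Prime := Fact.out
  rw [sum_eq_single_of_mem (a - 1) (mem_range.2 (by omega))]
  · have hsplit : (a - 1 + 1) * p ^ (c + 1 + D) =
        a * p ^ (c + 1) + (p - 1) * (p ^ (c + 1) * repdigit p a D) := by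
      rw [Nat.sub_add_cancel ha, pow_add p (c + 1), mul_left_comm a,
        ← sub_one_mul_repdigit_add hp.one_le a D]
      ring
    rw [hsplit, stirlingSecond_mul_pow_zmod hodd ha, if_pos (dvd_mul_right _ _),
      Nat.mul_div_cancel_left _ (by omega), show p - 1 - 1 - (a - 1) = p - 1 - a by omega]
  · intro i hi hia
    rw [mem_range] at hi
    have hle : a * p ^ (c + 1) ≤ (i + 1) * p ^ (c + 1 + D) := by
      have hpD : a ≤ p ^ D := (show a ≤ p by omega).trans (Nat.le_self_pow (by omega) p)
      rw [add_comm (c + 1) D, pow_add p D, ← mul_assoc]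
      exact Nat.mul_le_mul_right _ (hpD.trans (Nat.le_mul_of_pos_left _ i.succ_pos))
    obtain ⟨m, hm⟩ := Nat.exists_eq_add_of_le hle
    rw [hm, stirlingSecond_mul_pow_zmod hodd ha, if_neg, mul_zero]
    rw [sub_one_dvd_iff_of_mul_pow_eq hm]
    intro h
    rw [← Nat.sub_add_cancel ha] at h
    exact hia ((h.add_right_cancel' 1).eq_of_lt_of_lt hi (by omega))

theorem pow_repdigit_dvd_factorial (a c : ℕ) : p ^ repdigit p a c ∣ (a * p ^ c).factorial := by
  rw [mul_comm a, factorial_pow_mul (NeZero.pos p), mul_assoc]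
  exact dvd_mul_right _ _

theorem sub_one_mul_choose_repdigit {a : ℕ} (ha : 1 ≤ a) (c D : ℕ) :
    (p - 1) * (p ^ c * repdigit p a (D + 1)).choose (a * p ^ c) =
      (p ^ (D + 1) - 1) *
        (a * p ^ c - 1 + p ^ (c + 1) * repdigit p a D).choose (a * p ^ c - 1) := by
  have hA : 0 < a * p ^ c := Nat.mul_pos ha (pow_pos (NeZero.pos p) _)
  obtain ⟨A, hA'⟩ := Nat.exists_eq_add_of_lt hA
  rw [zero_add] at hA'
  have hsum : p ^ c * repdigit p a (D + 1) = A + p ^ (c + 1) * repdigit p a D + 1 := by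
    rw [repdigit_succ', mul_add, mul_comm (p ^ c) a, hA', pow_succ]
    ring
  have h := Nat.add_one_mul_choose_eq (A + p ^ (c + 1) * repdigit p a D) A
  rw [← hsum, ← hA'] at h
  rw [hA', Nat.add_sub_cancel, ← hA']
  have hrep : (p - 1) * repdigit p a (D + 1) = a * (p ^ (D + 1) - 1) := by
    rw [Nat.mul_sub, ← sub_one_mul_repdigit_add NeZero.one_le a (D + 1), mul_one,
      Nat.add_sub_cancel]
  refine Nat.eq_of_mul_eq_mul_left hA ?_
  calc _ = (p - 1) * ((p ^ c * repdigit p a (D + 1)).choose (a * p ^ c) * (a * p ^ c)) := by ring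
    _ = p ^ c * ((p - 1) * repdigit p a (D + 1)) *
        (A + p ^ (c + 1) * repdigit p a D).choose A := by rw [← h]; ring
    _ = _ := by rw [hrep]; ring

theorem mul_choose_sub_one_repdigit_zmod (hodd : Odd p) {a c D : ℕ} (ha : 1 ≤ a) (hap : a < p)
    (hD : c + 1 ≤ D) {K : ℕ} (hK : (a * p ^ (c + 1)).factorial = p ^ repdigit p a (c + 1) * K) :
    (K * (a * p ^ c - 1 + p ^ (c + 1) * repdigit p a D).choose (a * p ^ c - 1) :
        ZMod (p ^ (c + 1))) =
      -((p - 1) * (-1) ^ a * unitFactorial p (repdigit p a (c + 1))) := by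
  have h := congrArg (Nat.cast : ℕ → ZMod (p ^ (c + 1)))
    (sub_one_mul_choose_repdigit (p := p) ha c D)
  have hpow : ((p ^ (D + 1) : ℕ) : ZMod (p ^ (c + 1))) = 0 :=
    (ZMod.natCast_eq_zero_iff _ _).2 (pow_dvd_pow p (by omega))
  rw [Nat.cast_mul, Nat.cast_mul, Nat.cast_sub NeZero.one_le,
    Nat.cast_sub (Nat.one_le_pow _ _ (NeZero.pos p)), hpow, Nat.cast_one] at h
  linear_combination K * h -
    (p - 1 : ZMod (p ^ (c + 1))) * mul_choose_repdigit_zmod hodd hap hD hK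

theorem isUnit_natCast_sub_one_zmod_pow (c : ℕ) : IsUnit (p - 1 : ZMod (p ^ c)) := by
  rw [← Nat.cast_one (R := ZMod (p ^ c)), ← Nat.cast_sub (NeZero.one_le (n := p)),
    ZMod.isUnit_iff_coprime]
  exact ((Nat.coprime_self_sub_left NeZero.one_le).2 (Nat.coprime_one_left p)).pow_right _

theorem residueSum_fleckUnit_repdigit (hodd : Odd p) {a c : ℕ} (ha : 1 ≤ a) (hap : a < p - 1)
    {r : ℤ} (hr : ¬ (p : ℤ) ∣ r) {D : ℕ} (hD : repdigit p a (c + 1) ≤ D) :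
    residueSum ℤ p r ((1 - X) ^ a * fleckUnit p ^ repdigit p a (c + 1)) *
        r ^ (a * p ^ (c + 1 + D)) ≡
      -(-1) ^ (a * (c + 1)) * unitFactorial p (repdigit p a (c + 1)) [ZMOD (p : ℤ) ^ (c + 1)] := by
  have hcD : c + 1 ≤ D := (le_repdigit NeZero.one_le ha _).trans hD
  obtain ⟨K, hK⟩ := pow_repdigit_dvd_factorial (p := p) a (c + 1)
  have hsum := sub_one_mul_residueSum_fleckUnit_modEq hodd ha (B := c + 1 + D) hK (by omega) hr
  have hr1 := (pow_prime_pow_pow_sub_one_modEq_one hr (c + 1 + D)).of_dvd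
    (pow_dvd_pow (p : ℤ) (show c + 1 ≤ c + 1 + D + 1 by omega))
  rw [← Nat.cast_pow, ← ZMod.intCast_eq_intCast_iff] at hsum hr1 ⊢
  push_cast at hsum hr1 ⊢
  have hrr : (r : ZMod (p ^ (c + 1))) ^ ((p - 1 - a) * p ^ (c + 1 + D)) *
      r ^ (a * p ^ (c + 1 + D)) = 1 := by
    rw [← pow_add, ← add_mul, Nat.sub_add_cancel hap.le, mul_comm, pow_mul, hr1]
  have hsq : ∀ i, (-1 : ZMod (p ^ (c + 1))) ^ i * (-1) ^ i = 1 := fun i => by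
    rw [← mul_pow, neg_mul_neg, one_mul, one_pow]
  have hchoose := mul_choose_sub_one_repdigit_zmod hodd ha (by omega) hcD hK
  rw [sum_pow_mul_stirlingSecond_zmod hodd ha hap (by omega)] at hsum
  rw [← neg_one_pow_repdigit hodd]
  refine (isUnit_natCast_sub_one_zmod_pow (c + 1)).mul_left_cancel ?_
  set φ : ZMod (p ^ (c + 1)) :=
    Int.cast (residueSum ℤ p r ((1 - X) ^ a * fleckUnit p ^ repdigit p a (c + 1)))
  set Γ : ZMod (p ^ (c + 1)) := Nat.cast (unitFactorial p (repdigit p a (c + 1)))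
  set ρ : ZMod (p ^ (c + 1)) := r ^ (a * p ^ (c + 1 + D))
  set ρ' : ZMod (p ^ (c + 1)) := r ^ ((p - 1 - a) * p ^ (c + 1 + D))
  set ε : ZMod (p ^ (c + 1)) := (-1) ^ a
  set σ : ZMod (p ^ (c + 1)) := (-1) ^ repdigit p a (c + 1)
  calc (p - 1) * (φ * ρ) = σ * ρ * ((p - 1) * σ * φ) := by
        linear_combination -(p - 1) * φ * ρ * hsq (repdigit p a (c + 1))
    _ = -((p - 1) * (ε * ε) * (ρ' * ρ) * σ * Γ) := by
        rw [hsum]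
        linear_combination σ * ρ * ρ' * ε * hchoose
    _ = (p - 1) * (-σ * Γ) := by
        rw [hsq a, hrr]
        ring

end FleckQuotientRepdigit

section CyclicRing

open Polynomial

variable {p : ℕ} [Fact p.Prime]

/-- The group ring of the cyclic group of order `p` over the field with `p` elements; the residue
sums modulo `p` are its coordinates. -/
abbrev CyclicRing (p : ℕ) := (ZMod p)[X] ⧸ Ideal.span {(X ^ p - 1 : (ZMod p)[X])}

/-- The class of a polynomial in the group ring `CyclicRing p`. -/
noncomputable abbrev toCyclic (p : ℕ) : (ZMod p)[X] →+* CyclicRing p := Ideal.Quotient.mk _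

theorem toCyclic_eq_iff {f g : (ZMod p)[X]} : toCyclic p f = toCyclic p g ↔ X ^ p - 1 ∣ f - g :=
  Ideal.Quotient.eq.trans Ideal.mem_span_singleton

theorem residueSum_eq_of_toCyclic_eq {f g : (ZMod p)[X]} (h : toCyclic p f = toCyclic p g)
    (r : ℤ) : residueSum (ZMod p) p r f = residueSum (ZMod p) p r g :=
  residueSum_eq_of_dvd (toCyclic_eq_iff.1 h)

theorem toCyclic_X_pow : toCyclic p X ^ p = 1 := by
  rw [← map_pow, ← map_one (toCyclic p), toCyclic_eq_iff]

theorem toCyclic_one_sub_X_pow : (1 - toCyclic p X) ^ p = 0 := by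
  rw [← map_one (toCyclic p), ← map_sub, ← map_pow, sub_pow_char, map_sub, one_pow, map_one,
    map_pow, toCyclic_X_pow, sub_self]

theorem one_sub_toCyclic_X_mul_pow_sub_one (p : ℕ) [Fact p.Prime] :
    (1 - toCyclic p X) * (1 - toCyclic p X) ^ (p - 1) = 0 := by
  rw [mul_pow_sub_one (NeZero.ne p), toCyclic_one_sub_X_pow]

theorem toCyclic_expand (f : (ZMod p)[X]) :
    toCyclic p (expand (ZMod p) p f) = toCyclic p (C (f.eval 1)) := by
  rw [toCyclic_eq_iff]
  simpa using map_dvd (expand (ZMod p) p) (X_sub_C_dvd_sub_C_eval : X - C 1 ∣ f - C (f.eval 1))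

theorem toCyclic_one_sub_X_pow_mul (f : (ZMod p)[X]) :
    (1 - toCyclic p X) ^ (p - 1) * toCyclic p f =
      (1 - toCyclic p X) ^ (p - 1) * toCyclic p (C (f.eval 1)) := by
  obtain ⟨g, hg⟩ : X - C 1 ∣ f - C (f.eval 1) := X_sub_C_dvd_sub_C_eval
  have h := congrArg (toCyclic p) hg
  rw [map_sub, map_mul, map_sub, C_1, map_one] at h
  linear_combination (1 - toCyclic p X) ^ (p - 1) * h -
    toCyclic p g * one_sub_toCyclic_X_mul_pow_sub_one p

theorem natCast_zmod_ne_zero {n : ℕ} (hn : n ≠ 0) (hnp : n < p) : (n : ZMod p) ≠ 0 := by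
  rw [Ne, ZMod.natCast_eq_zero_iff]
  exact Nat.not_dvd_of_pos_of_lt (Nat.pos_of_ne_zero hn) hnp

theorem eq_C_of_derivative_eq_zero_of_degree_lt {f : (ZMod p)[X]} (hf : derivative f = 0)
    (hdeg : f.degree < p) : f = C (f.coeff 0) := by
  ext n
  rw [coeff_C]
  split_ifs with hn
  · rw [hn]
  rcases lt_or_ge n p with hnp | hnp
  · obtain ⟨m, rfl⟩ := Nat.exists_eq_succ_of_ne_zero hn
    have h := congrArg (fun g => g.coeff m) hf
    simp only [coeff_derivative, coeff_zero] at h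
    rw [← Nat.cast_succ] at h
    exact (mul_eq_zero.1 h).resolve_right (natCast_zmod_ne_zero hn hnp)
  · exact coeff_eq_zero_of_degree_lt (hdeg.trans_le (by exact_mod_cast hnp))

theorem toCyclic_eq_C_of_derivative {f : (ZMod p)[X]} (hf : toCyclic p (X * derivative f) = 0) :
    toCyclic p f = toCyclic p (C (f.eval 1)) := by
  have hp0 : p ≠ 0 := NeZero.ne p
  have hmonic : (X ^ p - 1 : (ZMod p)[X]).Monic := monic_X_pow_sub_C 1 hp0
  have hdegm : (X ^ p - 1 : (ZMod p)[X]).degree = p := degree_X_pow_sub_C (NeZero.pos p) 1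
  set g := f %ₘ (X ^ p - 1)
  set d := f /ₘ (X ^ p - 1)
  have hfg : f = g + (X ^ p - 1) * d := (modByMonic_add_div f _).symm
  have hdeg : g.degree < p := (degree_modByMonic_lt f hmonic).trans_eq hdegm
  have hder : derivative f = derivative g + (X ^ p - 1) * derivative d := by
    rw [hfg]
    rw [derivative_add, derivative_mul, derivative_sub, derivative_X_pow, CharP.cast_eq_zero]
    simp
  have hdvd : X ^ p - 1 ∣ derivative g := by
    have h := (toCyclic_eq_iff (g := 0)).1 (hf.trans (map_zero _).symm)
    rw [sub_zero, hder, mul_add, mul_left_comm, dvd_add_left (dvd_mul_right _ _)] at h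
    have hcop : IsCoprime (X ^ p - 1 : (ZMod p)[X]) X :=
      ⟨-1, X ^ (p - 1), by linear_combination pow_sub_one_mul hp0 (X : (ZMod p)[X])⟩
    exact hcop.dvd_of_dvd_mul_left h
  have hconst : g = C (g.coeff 0) := by
    refine eq_C_of_derivative_eq_zero_of_degree_lt ?_ hdeg
    refine eq_zero_of_dvd_of_degree_lt hdvd ?_
    rw [hdegm]
    exact (degree_derivative_le).trans_lt hdeg
  have heval : f.eval 1 = g.coeff 0 := by
    rw [hfg, hconst]
    simp
  rw [toCyclic_eq_iff, heval, ← hconst]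
  exact ⟨d, by linear_combination hfg⟩

end CyclicRing

section TruncatedLogarithm

open Polynomial

variable {p : ℕ} [Fact p.Prime]

/-- The reduction modulo `p` of `fleckUnit p`. -/
noncomputable def fleckUnitMod (p : ℕ) [Fact p.Prime] : (ZMod p)[X] :=
  (fleckUnit p).map (Int.castRingHom (ZMod p))

theorem eval_one_fleckUnitMod : (fleckUnitMod p).eval 1 = 1 := by
  rw [fleckUnitMod, eval_one_map, eval_one_fleckUnit, map_one]

/-- The truncated series of `-log X` at `1`; for odd `p` it is `∑_{0 < k < p} (1 - X) ^ k / k`. -/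
noncomputable def truncLog (p : ℕ) [Fact p.Prime] : (ZMod p)[X] := (1 - X) * fleckUnitMod p

theorem toCyclic_truncLog :
    toCyclic p (truncLog p) = (1 - toCyclic p X) * toCyclic p (fleckUnitMod p) := by
  rw [truncLog, map_mul, map_sub, map_one]

theorem toCyclic_X_mul_derivative_truncLog :
    toCyclic p X * toCyclic p (derivative (truncLog p)) = (1 - toCyclic p X) ^ (p - 1) - 1 := by
  have hder : derivative (truncLog p) = (1 - X) ^ (p - 1) - X ^ (p - 1) := by
    simpa [truncLog, fleckUnitMod, ← derivative_map] using
      congrArg (Polynomial.map (Int.castRingHom (ZMod p))) (derivative_one_sub_X_mul_fleckUnit p)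
  have hX : toCyclic p X * toCyclic p X ^ (p - 1) = 1 := by
    rw [mul_pow_sub_one (NeZero.ne p), toCyclic_X_pow]
  simp only [hder, map_sub, map_pow, map_one]
  linear_combination -one_sub_toCyclic_X_mul_pow_sub_one p - hX

theorem toCyclic_truncLog_mul_one_sub_X_pow :
    toCyclic p (truncLog p) * (1 - toCyclic p X) ^ (p - 1) = 0 := by
  rw [toCyclic_truncLog, mul_right_comm, one_sub_toCyclic_X_mul_pow_sub_one, zero_mul]

theorem toCyclic_truncLog_pow_prime : toCyclic p (truncLog p) ^ p = 0 := by
  rw [toCyclic_truncLog, mul_pow, toCyclic_one_sub_X_pow, zero_mul]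

theorem toCyclic_truncLog_pow_sub_one :
    toCyclic p (truncLog p) ^ (p - 1) = (1 - toCyclic p X) ^ (p - 1) := by
  rw [toCyclic_truncLog, mul_pow, ← map_pow, toCyclic_one_sub_X_pow_mul, eval_pow,
    eval_one_fleckUnitMod, one_pow, C_1, map_one, mul_one]

theorem residueSum_truncLog_pow {r : ℤ} (hr : (r : ZMod p) ≠ 0) (i : ℕ) :
    residueSum (ZMod p) p r (truncLog p ^ (i + 1)) =
      -(i + 1).factorial * (-(r : ZMod p))⁻¹ ^ (i + 1) := by
  have hlog := toCyclic_X_mul_derivative_truncLog (p := p)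
  induction i with
  | zero =>
    have hone : residueSum (ZMod p) p r 1 = 0 := by
      rw [← monomial_zero_one, residueSum_monomial, if_neg]
      rwa [Nat.cast_zero, zero_sub, ← Int.dvd_iff_emod_eq_zero, dvd_neg,
        ← ZMod.intCast_zmod_eq_zero_iff_dvd]
    have h := residueSum_X_mul_derivative (r := r) (truncLog p)
    rw [residueSum_eq_of_toCyclic_eq (g := (1 - X) ^ (p - 1) - 1) (by simpa using hlog), map_sub,
      one_sub_X_pow_sub_one_zmod, residueSum_geom_sum (NeZero.ne p), hone] at h
    refine mul_left_cancel₀ hr ?_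
    simp only [zero_add, pow_one, Nat.factorial_one, Nat.cast_one, ← h]
    field_simp
    norm_num
  | succ i ih =>
    have heuler : toCyclic p (X * derivative (truncLog p ^ (i + 1 + 1))) =
        toCyclic p ((-((i + 1 + 1 : ℕ) : ZMod p)) • truncLog p ^ (i + 1)) := by
      rw [smul_eq_C_mul, derivative_pow, Nat.add_sub_cancel, C_neg]
      simp only [map_mul, map_neg, map_pow, pow_succ]
      linear_combination toCyclic p (C ((i + 1 + 1 : ℕ) : ZMod p)) * toCyclic p (truncLog p) ^ i *
        (toCyclic p (truncLog p) * hlog + toCyclic_truncLog_mul_one_sub_X_pow (p := p))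
    have h := residueSum_X_mul_derivative (r := r) (truncLog p ^ (i + 1 + 1))
    rw [residueSum_eq_of_toCyclic_eq heuler, map_smul, ih, smul_eq_mul] at h
    refine mul_left_cancel₀ hr ?_
    rw [← h, Nat.factorial_succ (i + 1), pow_succ _ (i + 1)]
    push_cast
    field_simp

theorem natCast_factorial_zmod_ne_zero {j : ℕ} (hj : j < p) : (j.factorial : ZMod p) ≠ 0 :=
  ((IsUnit.natCast_factorial_iff_of_charP p).2 hj).ne_zero

/-- The exponential series modulo `p`, truncated before the undefined coefficient `1 / p!`. -/
noncomputable def truncExp (p : ℕ) [Fact p.Prime] : (ZMod p)[X] :=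
  ∑ j ∈ range p, C (j.factorial : ZMod p)⁻¹ * X ^ j

theorem coeff_sum_range_C_mul_X_pow {R : Type*} [Semiring R] (f : ℕ → R) (n i : ℕ) :
    (∑ j ∈ range n, C (f j) * X ^ j).coeff i = if i < n then f i else 0 := by
  simp [finsetSum_coeff, coeff_X_pow]

theorem coeff_truncExp_of_lt {j : ℕ} (hj : j < p) :
    (truncExp p).coeff j = (j.factorial : ZMod p)⁻¹ := by
  rw [truncExp, coeff_sum_range_C_mul_X_pow, if_pos hj]

theorem coeff_truncExp_of_ge {j : ℕ} (hj : p ≤ j) : (truncExp p).coeff j = 0 := by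
  rw [truncExp, coeff_sum_range_C_mul_X_pow, if_neg hj.not_gt]

theorem coeff_zero_truncExp : (truncExp p).coeff 0 = 1 := by
  rw [coeff_truncExp_of_lt (NeZero.pos p), Nat.factorial_zero, Nat.cast_one, inv_one]

theorem derivative_truncExp : derivative (truncExp p) = truncExp p + X ^ (p - 1) := by
  have hp0 : 0 < p := NeZero.pos p
  ext j
  rw [coeff_derivative, coeff_add, coeff_X_pow]
  rcases lt_trichotomy (j + 1) p with hj | hj | hj
  · have hj1 := natCast_zmod_ne_zero j.succ_ne_zero hj
    rw [coeff_truncExp_of_lt hj, coeff_truncExp_of_lt (by lia), if_neg (by lia),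
      Nat.factorial_succ, Nat.cast_mul, ← Nat.cast_succ, mul_inv, mul_right_comm,
      inv_mul_cancel₀ hj1, one_mul, add_zero]
  · rw [coeff_truncExp_of_ge hj.ge, coeff_truncExp_of_lt (by lia), if_pos (by lia),
      show j = p - 1 by lia, ZMod.wilsons_lemma]
    simp
  · rw [coeff_truncExp_of_ge hj.le, coeff_truncExp_of_ge (by lia), if_neg (by lia)]
    simp

theorem toCyclic_X_mul_truncExp_comp_truncLog :
    toCyclic p X * toCyclic p ((truncExp p).comp (truncLog p)) = 1 := by
  have heval : ((truncExp p).comp (truncLog p)).eval 1 = 1 := by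
    rw [eval_comp, truncLog, eval_mul, eval_sub, eval_one, eval_X, sub_self, zero_mul,
      ← coeff_zero_eq_eval_zero, coeff_zero_truncExp]
  have hT := toCyclic_one_sub_X_pow_mul ((truncExp p).comp (truncLog p))
  rw [heval, C_1, map_one, mul_one] at hT
  have hTT : (1 - toCyclic p X) ^ (p - 1) * (1 - toCyclic p X) ^ (p - 1) = 0 := by
    have hp2 : 2 ≤ p := Nat.Prime.two_le Fact.out
    rw [← pow_add, show p - 1 + (p - 1) = p + (p - 2) by lia, pow_add, toCyclic_one_sub_X_pow,
      zero_mul]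
  have hder : toCyclic p (X * derivative (X * (truncExp p).comp (truncLog p))) = 0 := by
    rw [derivative_mul, derivative_X, one_mul, derivative_comp, derivative_truncExp]
    simp only [map_mul, map_add, add_comp, X_pow_comp, map_pow, toCyclic_truncLog_pow_sub_one]
    set E := toCyclic p ((truncExp p).comp (truncLog p))
    linear_combination toCyclic p X * (E + (1 - toCyclic p X) ^ (p - 1)) *
      toCyclic_X_mul_derivative_truncLog (p := p) + toCyclic p X * hT + toCyclic p X * hTT
  rw [← map_mul, toCyclic_eq_C_of_derivative hder, eval_mul, eval_X, heval, one_mul, C_1, map_one]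

end TruncatedLogarithm

section BernoulliGeneratingFunction

open Polynomial

variable {p : ℕ} [Fact p.Prime]

/-- The generating function `∑ β k * X ^ k / k!` of a sequence modulo `p`, truncated at the last
index at which the recurrence of the Bernoulli numbers makes sense modulo `p`. -/
noncomputable def truncEGF (p : ℕ) [Fact p.Prime] (β : ℕ → ZMod p) : (ZMod p)[X] :=
  ∑ k ∈ range (p - 1), C (β k * (k.factorial : ZMod p)⁻¹) * X ^ k

variable {β : ℕ → ZMod p}

theorem coeff_truncEGF_of_lt {k : ℕ} (hk : k < p - 1) :
    (truncEGF p β).coeff k = β k * (k.factorial : ZMod p)⁻¹ := by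
  rw [truncEGF, coeff_sum_range_C_mul_X_pow (fun k => β k * (k.factorial : ZMod p)⁻¹), if_pos hk]

theorem X_pow_dvd_truncEGF_mul_divX_truncExp_sub_one
    (hβ : ∀ m < p, ∑ k ∈ range m, (m.choose k : ZMod p) * β k = if m = 1 then 1 else 0) :
    X ^ (p - 1) ∣ truncEGF p β * (truncExp p).divX - 1 := by
  rw [X_pow_dvd_iff]
  intro d hd
  have hterm : ∀ i ∈ range (d + 1), (truncEGF p β).coeff i * (truncExp p).divX.coeff (d - i) =
      ((d + 1).factorial : ZMod p)⁻¹ * (((d + 1).choose i : ZMod p) * β i) := fun i hi => by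
    have hid : i ≤ d := Nat.lt_succ_iff.1 (mem_range.1 hi)
    have hchoose := congrArg (Nat.cast : ℕ → ZMod p)
      (Nat.choose_mul_factorial_mul_factorial (hid.trans d.le_succ))
    have hi := natCast_factorial_zmod_ne_zero (p := p) (j := i) (by lia)
    have hdi := natCast_factorial_zmod_ne_zero (p := p) (j := d + 1 - i) (by lia)
    have hd1 := natCast_factorial_zmod_ne_zero (p := p) (j := d + 1) (by lia)
    rw [coeff_truncEGF_of_lt (by lia), coeff_divX, ← Nat.sub_add_comm hid,
      coeff_truncExp_of_lt (by lia)]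
    push_cast at hchoose
    field_simp
    linear_combination -β i * hchoose
  rw [coeff_sub, coeff_mul, Nat.sum_antidiagonal_eq_sum_range_succ_mk, sum_congr rfl hterm,
    ← mul_sum, hβ (d + 1) (by lia), coeff_one]
  rcases Nat.eq_zero_or_pos d with rfl | hd0
  · simp
  · rw [if_neg (by lia), if_neg (by lia), mul_zero, sub_zero]

theorem toCyclic_truncLog_mul_X_mul_fleckUnitMod
    (hβ : ∀ m < p, ∑ k ∈ range m, (m.choose k : ZMod p) * β k = if m = 1 then 1 else 0) :
    toCyclic p (truncLog p) * (toCyclic p X * toCyclic p (fleckUnitMod p)) =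
      toCyclic p (truncLog p) * toCyclic p ((truncEGF p β).comp (truncLog p)) := by
  set w := truncLog p
  set h := toCyclic p ((truncExp p).divX.comp w)
  set b := toCyclic p ((truncEGF p β).comp w)
  have hexp : toCyclic p X * (h * toCyclic p w + 1) = 1 := by
    have hcomp := congrArg (fun f => f.comp w) (divX_mul_X_add (truncExp p))
    rw [coeff_zero_truncExp, C_1, add_comp, mul_comp, X_comp, one_comp] at hcomp
    rw [← map_mul, ← map_one (toCyclic p), ← map_add, hcomp, toCyclic_X_mul_truncExp_comp_truncLog,
      map_one]
  have hinv : toCyclic p w * (b * h) = toCyclic p w := by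
    obtain ⟨f, hf⟩ := X_pow_dvd_truncEGF_mul_divX_truncExp_sub_one hβ
    have hcomp := congrArg (fun f => toCyclic p (f.comp w)) hf
    simp only [sub_comp, mul_comp, one_comp, X_pow_comp, map_sub, map_mul, map_one,
      map_pow] at hcomp
    have hpow : toCyclic p w * toCyclic p w ^ (p - 1) = 0 := by
      rw [mul_pow_sub_one (NeZero.ne p), toCyclic_truncLog_pow_prime]
    linear_combination toCyclic p w * hcomp + toCyclic p (f.comp w) * hpow
  have hw : toCyclic p w = (1 - toCyclic p X) * toCyclic p (fleckUnitMod p) := toCyclic_truncLog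
  linear_combination b * toCyclic p (fleckUnitMod p) * hexp - b * hw -
    toCyclic p X * toCyclic p (fleckUnitMod p) * hinv

end BernoulliGeneratingFunction

section FermatQuotientOfFleckUnit

open Polynomial

variable {p : ℕ} [Fact p.Prime]

/-- The reduction modulo `p` of the Fermat quotient of `fleckUnit p`. -/
noncomputable def fleckUnitFermatQuotient (p : ℕ) [Fact p.Prime] : (ZMod p)[X] :=
  (fermatQuotient p (fleckUnit p)).map (Int.castRingHom (ZMod p))

theorem eval_one_fleckUnitFermatQuotient : (fleckUnitFermatQuotient p).eval 1 = 0 := by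
  rw [fleckUnitFermatQuotient, eval_one_map, eval_one_fermatQuotient (eval_one_fleckUnit p),
    map_zero]

theorem toCyclic_fleckUnitMod_pow_prime : toCyclic p (fleckUnitMod p) ^ p = 1 := by
  rw [← map_pow, ← ZMod.expand_card (fleckUnitMod p), toCyclic_expand, eval_one_fleckUnitMod,
    C_1, map_one]

theorem derivative_fleckUnitFermatQuotient : derivative (fleckUnitFermatQuotient p) =
    fleckUnitMod p ^ (p - 1) * derivative (fleckUnitMod p) -
      expand (ZMod p) p (derivative (fleckUnitMod p)) * X ^ (p - 1) := by
  simp [fleckUnitFermatQuotient, fleckUnitMod, derivative_map, derivative_fermatQuotient,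
    map_expand]

theorem toCyclic_truncLog_mul_X_mul_derivative_fermatQuotient :
    toCyclic p (truncLog p) * (toCyclic p X * toCyclic p (derivative (fleckUnitFermatQuotient p))) =
      (1 - toCyclic p X) ^ (p - 1) - 1 + toCyclic p X * toCyclic p (fleckUnitMod p) -
        toCyclic p (C ((derivative (fleckUnitMod p)).eval 1)) * toCyclic p (truncLog p) := by
  have hU : toCyclic p (fleckUnitMod p) * toCyclic p (fleckUnitMod p) ^ (p - 1) = 1 := by
    rw [mul_pow_sub_one (NeZero.ne p), toCyclic_fleckUnitMod_pow_prime]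
  have hX : toCyclic p X * toCyclic p X ^ (p - 1) = 1 := by
    rw [mul_pow_sub_one (NeZero.ne p), toCyclic_X_pow]
  have hw' : toCyclic p (derivative (truncLog p)) = -toCyclic p (fleckUnitMod p) +
      (1 - toCyclic p X) * toCyclic p (derivative (fleckUnitMod p)) := by
    simp [truncLog, derivative_mul]
  have hq := congrArg (toCyclic p) (derivative_fleckUnitFermatQuotient (p := p))
  simp only [map_sub, map_mul, map_pow, toCyclic_expand] at hq
  have hw := toCyclic_truncLog (p := p)
  set x := toCyclic p X
  set u := toCyclic p (fleckUnitMod p)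
  set u' := toCyclic p (derivative (fleckUnitMod p))
  linear_combination toCyclic p (truncLog p) * x * hq + toCyclic_X_mul_derivative_truncLog (p := p)
    - x * hw' - toCyclic p (C ((derivative (fleckUnitMod p)).eval 1)) * toCyclic p (truncLog p) * hX
    + x * (1 - x) * u' * hU + x * u ^ (p - 1) * u' * hw

theorem two_mul_eval_one_derivative_fleckUnitMod (hodd : Odd p) :
    2 * (derivative (fleckUnitMod p)).eval 1 = -1 := by
  have h := congrArg (Int.cast : ℤ → ZMod p) (two_mul_eval_one_derivative_fleckUnit hodd)
  rw [fleckUnitMod, derivative_map, eval_one_map, eq_intCast]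
  simpa using h

variable {β : ℕ → ZMod p}

theorem truncEGF_eq_add_sum_Ico (hodd : Odd p)
    (hβ : ∀ m < p, ∑ k ∈ range m, (m.choose k : ZMod p) * β k = if m = 1 then 1 else 0) :
    truncEGF p β = 1 + C ((derivative (fleckUnitMod p)).eval 1) * X +
      ∑ k ∈ Ico 2 (p - 1), C (β k * (k.factorial : ZMod p)⁻¹) * X ^ k := by
  have hp3 : 3 ≤ p := (Nat.Prime.odd_iff Fact.out).1 hodd
  have hβ0 : β 0 = 1 := by simpa using hβ 1 (by lia)
  have hβ1 : β 1 = (derivative (fleckUnitMod p)).eval 1 := by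
    have h2 := hβ 2 (by lia)
    simp only [sum_range_succ, range_zero, sum_empty, zero_add, Nat.choose_zero_right,
      Nat.choose_one_right, Nat.cast_one, Nat.cast_ofNat, one_mul, hβ0, OfNat.ofNat_ne_one,
      if_false] at h2
    refine mul_left_cancel₀ (natCast_zmod_ne_zero (n := 2) two_ne_zero hp3) ?_
    push_cast
    linear_combination h2 - two_mul_eval_one_derivative_fleckUnitMod hodd
  rw [truncEGF, range_eq_Ico, sum_eq_sum_Ico_succ_bot (by lia), sum_eq_sum_Ico_succ_bot (by lia)]
  simp [hβ0, hβ1, add_assoc]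

theorem toCyclic_truncLog_sq_mul_X_mul_derivative_fermatQuotient (hodd : Odd p)
    (hβ : ∀ m < p, ∑ k ∈ range m, (m.choose k : ZMod p) * β k = if m = 1 then 1 else 0) :
    toCyclic p (truncLog p) ^ 2 *
        (toCyclic p X * toCyclic p (derivative (fleckUnitFermatQuotient p))) =
      toCyclic p (truncLog p * ∑ k ∈ Ico 2 (p - 1),
        C (β k * (k.factorial : ZMod p)⁻¹) * truncLog p ^ k) := by
  have hgen := toCyclic_truncLog_mul_X_mul_fleckUnitMod hβ
  simp only [truncEGF_eq_add_sum_Ico hodd hβ, add_comp, one_comp, mul_comp, C_comp, X_comp,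
    Polynomial.sum_comp, X_pow_comp, map_add, map_mul (toCyclic p) (C (eval _ _)), map_one] at hgen
  rw [map_mul]
  linear_combination toCyclic_truncLog_mul_one_sub_X_pow (p := p) +
    toCyclic p (truncLog p) * toCyclic_truncLog_mul_X_mul_derivative_fermatQuotient (p := p) + hgen

theorem toCyclic_X_mul_derivative_truncLog_pow_mul_fermatQuotient (hodd : Odd p)
    (hβ : ∀ m < p, ∑ k ∈ range m, (m.choose k : ZMod p) * β k = if m = 1 then 1 else 0) (a : ℕ) :
    toCyclic p (X * derivative (truncLog p ^ (a + 2) * fleckUnitFermatQuotient p)) =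
      toCyclic p ((-((a + 2 : ℕ) : ZMod p)) • (truncLog p ^ (a + 1) * fleckUnitFermatQuotient p) +
        ∑ k ∈ Ico 2 (p - 1), (β k * (k.factorial : ZMod p)⁻¹) • truncLog p ^ (a + 1 + k)) := by
  have hsum : ∑ k ∈ Ico 2 (p - 1), (β k * (k.factorial : ZMod p)⁻¹) • truncLog p ^ (a + 1 + k) =
      truncLog p ^ a * (truncLog p * ∑ k ∈ Ico 2 (p - 1),
        C (β k * (k.factorial : ZMod p)⁻¹) * truncLog p ^ k) := by
    simp only [mul_sum, smul_eq_C_mul]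
    exact sum_congr rfl fun k _ => by ring
  have hw' := toCyclic_X_mul_derivative_truncLog (p := p)
  rw [hsum, derivative_mul, derivative_pow, map_add, map_mul (toCyclic p) (truncLog p ^ a),
    ← toCyclic_truncLog_sq_mul_X_mul_derivative_fermatQuotient hodd hβ,
    show a + 2 - 1 = a + 1 by lia, smul_eq_C_mul, C_neg]
  simp only [map_mul, map_add, map_pow, map_neg]
  linear_combination toCyclic p (C ((a + 2 : ℕ) : ZMod p)) * toCyclic p (truncLog p) ^ a *
    toCyclic p (fleckUnitFermatQuotient p) * (toCyclic p (truncLog p) * hw' +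
      toCyclic_truncLog_mul_one_sub_X_pow (p := p))

theorem toCyclic_truncLog_pow_sub_one_mul_fermatQuotient :
    toCyclic p (truncLog p ^ (p - 1) * fleckUnitFermatQuotient p) = 0 := by
  rw [map_mul, map_pow, toCyclic_truncLog_pow_sub_one, toCyclic_one_sub_X_pow_mul,
    eval_one_fleckUnitFermatQuotient, C_0, map_zero, mul_zero]

theorem residueSum_truncLog_pow_mul_fermatQuotient (hodd : Odd p)
    (hβ : ∀ m < p, ∑ k ∈ range m, (m.choose k : ZMod p) * β k = if m = 1 then 1 else 0)
    {r : ℤ} (hr : (r : ZMod p) ≠ 0) {a : ℕ} (ha : 1 ≤ a) (hap : a ≤ p - 1) :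
    residueSum (ZMod p) p r (truncLog p ^ a * fleckUnitFermatQuotient p) =
      ∑ k ∈ Ico 2 (p - 1), β k * ((a + k).factorial : ZMod p) *
        ((k : ZMod p) * (k.factorial : ZMod p))⁻¹ * (-(r : ZMod p))⁻¹ ^ (a + k) := by
  induction hap using Nat.decreasingInduction with
  | self =>
    rw [residueSum_eq_of_toCyclic_eq (g := 0) (by
      rw [toCyclic_truncLog_pow_sub_one_mul_fermatQuotient, map_zero]), map_zero, sum_eq_zero]
    intro k hk
    have hfac : ((p - 1 + k).factorial : ZMod p) = 0 := by
      rw [ZMod.natCast_eq_zero_iff, Nat.Prime.dvd_factorial Fact.out]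
      grind
    rw [hfac, mul_zero, zero_mul, zero_mul]
  | of_succ a hap ih =>
    obtain ⟨a, rfl⟩ := Nat.exists_eq_add_of_le' ha
    have h := residueSum_X_mul_derivative (r := r)
      (truncLog p ^ (a + 2) * fleckUnitFermatQuotient p)
    rw [residueSum_eq_of_toCyclic_eq
      (toCyclic_X_mul_derivative_truncLog_pow_mul_fermatQuotient hodd hβ a), ih (by lia), map_add,
      map_smul, map_sum, smul_eq_mul] at h
    refine mul_left_cancel₀ (neg_ne_zero.2 (natCast_zmod_ne_zero (n := a + 2) (by lia) (by lia))) ?_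
    rw [eq_sub_of_add_eq h, mul_sum, mul_sum, ← sum_sub_distrib]
    refine sum_congr rfl fun k hk => ?_
    obtain ⟨hk2, hkp⟩ := mem_Ico.1 hk
    have hk0 := natCast_zmod_ne_zero (p := p) (n := k) (by lia) (by lia)
    have hkf := natCast_factorial_zmod_ne_zero (p := p) (j := k) (by lia)
    rw [map_smul, smul_eq_mul, show a + 1 + k = (a + k) + 1 by ring, residueSum_truncLog_pow hr,
      show a + 1 + 1 + k = (a + k + 1) + 1 by ring, Nat.factorial_succ (a + k + 1),
      pow_succ _ (a + k + 1)]
    push_cast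
    field_simp
    ring

end FermatQuotientOfFleckUnit

section BernoulliIntegrality

variable {p : ℕ} [Fact p.Prime]

theorem natCast_inv_mem_padicInt {n : ℕ} (h : ¬ p ∣ n) : (n : ℚ_[p])⁻¹ ∈ PadicInt.subring p := by
  rw [PadicInt.mem_subring_iff, norm_inv, Padic.norm_natCast_eq_one_iff.2, inv_one]
  exact ((Fact.out : p.Prime).coprime_iff_not_dvd).2 h

theorem prime_mul_inv_prime_mem_padicInt {q : ℕ} (hq : q.Prime) :
    (p : ℚ_[p]) * (q : ℚ_[p])⁻¹ ∈ PadicInt.subring p := by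
  rcases eq_or_ne p q with rfl | hpq
  · rw [mul_inv_cancel₀ (Nat.cast_ne_zero.2 hq.ne_zero)]
    exact one_mem _
  · exact mul_mem (natCast_mem _ _) (natCast_inv_mem_padicInt
      (mt (Nat.prime_dvd_prime_iff_eq Fact.out hq).1 hpq))

theorem succ_le_of_pow_le_succ {p v j : ℕ} (h3 : 3 ≤ p) (hj : 1 ≤ j) (h : p ^ v ≤ j + 1) :
    v + 1 ≤ j := by
  have hbernoulli : 1 + j * 2 ≤ 3 ^ j :=
    mod_cast one_add_mul_le_pow (a := (2 : ℤ)) (by norm_num) j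
  have hlt : 3 ^ v < 3 ^ j := by
    have := (Nat.pow_le_pow_left h3 v).trans h
    omega
  exact (Nat.pow_lt_pow_iff_right (by norm_num)).1 hlt

theorem prime_pow_div_mem_padicInt (hodd : Odd p) {j : ℕ} (hj : 1 ≤ j) :
    (p : ℚ_[p]) ^ (j - 1) / ((j + 1 : ℕ) : ℚ_[p]) ∈ PadicInt.subring p := by
  have hp := (Fact.out : p.Prime)
  obtain ⟨v, u, hu, hv⟩ := Nat.exists_eq_pow_mul_and_not_dvd (n := j + 1) (by omega) p hp.ne_one
  have hu0 : u ≠ 0 := fun h => hu (h ▸ dvd_zero p)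
  have hvj : v + 1 ≤ j := succ_le_of_pow_le_succ (hp.odd_iff.1 hodd) hj
    (hv ▸ Nat.le_mul_of_pos_right _ (Nat.pos_of_ne_zero hu0))
  have hquot : (p : ℚ_[p]) ^ (j - 1) / ((j + 1 : ℕ) : ℚ_[p]) =
      (p : ℚ_[p]) ^ (j - 1 - v) * (u : ℚ_[p])⁻¹ := by
    have hp0 : (p : ℚ_[p]) ≠ 0 := Nat.cast_ne_zero.2 hp.ne_zero
    have hu0' : (u : ℚ_[p]) ≠ 0 := Nat.cast_ne_zero.2 hu0
    rw [hv, ← Nat.sub_add_cancel (show v ≤ j - 1 by omega), pow_add, Nat.add_sub_cancel]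
    push_cast
    field_simp
  rw [hquot]
  exact mul_mem (pow_mem (natCast_mem _ _) _) (natCast_inv_mem_padicInt hu)

theorem bernoulli_mem_padicInt (k : ℕ) (hk : k + 1 < p) :
    ((bernoulli k : ℚ) : ℚ_[p]) ∈ PadicInt.subring p := by
  induction k using Nat.strong_induction_on with
  | _ k ih =>
    have hrec : ((bernoulli k : ℚ) : ℚ_[p]) = ((k + 1 : ℕ) : ℚ_[p])⁻¹ *
        ((if k + 1 = 1 then 1 else 0) -
          ∑ x ∈ range k, ((k + 1).choose x : ℚ_[p]) * ((bernoulli x : ℚ) : ℚ_[p])) := by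
      have h := congrArg (Rat.cast : ℚ → ℚ_[p]) (sum_bernoulli (k + 1))
      rw [sum_range_succ, Nat.choose_succ_self_right] at h
      rw [eq_inv_mul_iff_mul_eq₀ (Nat.cast_ne_zero.2 k.succ_ne_zero)]
      push_cast [apply_ite (Rat.cast : ℚ → ℚ_[p])] at h ⊢
      linear_combination h
    rw [hrec]
    refine mul_mem (natCast_inv_mem_padicInt (Nat.not_dvd_of_pos_of_lt k.succ_pos hk))
      (sub_mem ?_ (sum_mem fun x hx => mul_mem (natCast_mem _ _) ?_))
    · exact ite_mem.2 ⟨fun _ => one_mem _, fun _ => zero_mem _⟩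
    · have hxk := mem_range.1 hx
      exact ih x hxk (by omega)

theorem prime_mul_bernoulli_mem_padicInt (k : ℕ) :
    (p : ℚ_[p]) * ((bernoulli k : ℚ) : ℚ_[p]) ∈ PadicInt.subring p := by
  rcases Nat.even_or_odd' k with ⟨m, rfl | rfl⟩
  · obtain ⟨z, hz⟩ := Bernoulli.vonStaudt_clausen m
    have hsub : (p : ℚ_[p]) * ((bernoulli (2 * m) : ℚ) : ℚ_[p]) = p * (z : ℚ_[p]) -
        ∑ q ∈ range (2 * m + 2) with q.Prime ∧ (q - 1) ∣ 2 * m,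
          (p : ℚ_[p]) * (q : ℚ_[p])⁻¹ := by
      have h := congrArg (Rat.cast : ℚ → ℚ_[p]) hz
      simp only [one_div] at h
      push_cast at h
      rw [← mul_sum]
      linear_combination -(p : ℚ_[p]) * h
    rw [hsub]
    exact sub_mem (mul_mem (natCast_mem _ _) (intCast_mem _ _))
      (sum_mem fun q hq => prime_mul_inv_prime_mem_padicInt (mem_filter.1 hq).2.1)
  · rcases Nat.eq_zero_or_pos m with rfl | hm
    · convert neg_mem (prime_mul_inv_prime_mem_padicInt (p := p) Nat.prime_two) using 1
      rw [mul_zero, zero_add, bernoulli_one]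
      push_cast
      ring
    · rw [bernoulli_eq_zero_of_odd ⟨m, rfl⟩ (by omega), Rat.cast_zero, mul_zero]
      exact zero_mem _

end BernoulliIntegrality

section Faulhaber

variable {p : ℕ} [Fact p.Prime]

theorem choose_succ_div_succ {K : Type*} [Field K] [CharZero K] (i j : ℕ) :
    ((i + j + 1).choose i : K) / ((i + j : ℕ) + 1) = ((i + j).choose i : K) / (j + 1 : ℕ) := by
  have h := Nat.choose_mul_succ_eq (i + j) i
  rw [show i + j + 1 - i = j + 1 by omega] at h
  rw [div_eq_div_iff (Nat.cast_add_one_ne_zero _) (Nat.cast_ne_zero.2 j.succ_ne_zero)]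
  exact_mod_cast h.symm

theorem exists_mul_pow_div_eq (hodd : Odd p) {x : ℚ_[p]} {s b j : ℕ}
    (hx : (p : ℚ_[p]) ^ s * x ∈ PadicInt.subring p) (hj : 1 ≤ j)
    (h : 2 * b + s + (j - 1) ≤ b * (j + 1)) :
    ∃ z ∈ PadicInt.subring p, x * (p : ℚ_[p]) ^ (b * (j + 1)) / ((j + 1 : ℕ) : ℚ_[p]) =
      (p : ℚ_[p]) ^ (2 * b) * z := by
  obtain ⟨e, he⟩ := Nat.exists_eq_add_of_le h
  refine ⟨(p : ℚ_[p]) ^ s * x * (p : ℚ_[p]) ^ e *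
    ((p : ℚ_[p]) ^ (j - 1) / ((j + 1 : ℕ) : ℚ_[p])),
    mul_mem (mul_mem hx (pow_mem (natCast_mem _ _) _)) (prime_pow_div_mem_padicInt hodd hj), ?_⟩
  rw [he]
  ring

-- For `b ≥ 2` the Bernoulli number may have a denominator `p`, which the term `j = 1` could not
-- absorb; but there the index is odd and greater than `1`.
theorem exists_bernoulli_mul_pow_div_eq (hodd : Odd p) {b i j : ℕ} (hb : 1 ≤ b) (hj : 1 ≤ j)
    (hij : i + j = p ^ (b - 1) * (p - 1)) :
    ∃ z ∈ PadicInt.subring p, ((bernoulli i : ℚ) : ℚ_[p]) * (p : ℚ_[p]) ^ (b * (j + 1)) /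
      ((j + 1 : ℕ) : ℚ_[p]) = (p : ℚ_[p]) ^ (2 * b) * z := by
  have h3 : 3 ≤ p := (Nat.Prime.odd_iff Fact.out).1 hodd
  rcases Nat.eq_or_lt_of_le hb with rfl | hb2
  · rw [Nat.sub_self, pow_zero, one_mul] at hij
    refine exists_mul_pow_div_eq hodd (s := 0) ?_ hj (by omega)
    rw [pow_zero, one_mul]
    exact bernoulli_mem_padicInt i (by omega)
  rcases Nat.eq_or_lt_of_le hj with rfl | hj2
  · have heven : Even (i + 1) := hij ▸ (Nat.Odd.sub_odd hodd odd_one).mul_left _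
    have hi : 2 * 2 ≤ i + 1 := by
      rw [hij]
      exact Nat.mul_le_mul ((by omega : 2 ≤ p).trans (Nat.le_self_pow (by omega) p)) (by omega)
    rw [bernoulli_eq_zero_of_odd (by simpa [Nat.even_add_one] using heven) (by omega)]
    exact ⟨0, zero_mem _, by simp⟩
  · refine exists_mul_pow_div_eq hodd (s := 1) ?_ hj ?_
    · rw [pow_one]
      exact prime_mul_bernoulli_mem_padicInt i
    · obtain ⟨b', rfl⟩ := Nat.exists_eq_add_of_le' hb2
      obtain ⟨j', rfl⟩ := Nat.exists_eq_add_of_le' hj2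
      rw [show j' + Nat.succ 1 - 1 = j' + 1 by omega]
      nlinarith [Nat.zero_le (b' * j')]

theorem exists_sum_range_pow_eq (hodd : Odd p) {b : ℕ} (hb : 1 ≤ b) :
    ∃ z ∈ PadicInt.subring p, ∑ k ∈ range (p ^ b), (k : ℚ_[p]) ^ (p ^ (b - 1) * (p - 1)) =
      (p : ℚ_[p]) ^ b * ((bernoulli (p ^ (b - 1) * (p - 1)) : ℚ) : ℚ_[p]) +
        (p : ℚ_[p]) ^ (2 * b) * z := by
  set m := p ^ (b - 1) * (p - 1) with hm
  have hterm : ∀ i ∈ range m, ∃ z ∈ PadicInt.subring p,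
      ((bernoulli i : ℚ) : ℚ_[p]) * ((m + 1).choose i) * ((p : ℚ_[p]) ^ b) ^ (m + 1 - i) /
        (m + 1) = (p : ℚ_[p]) ^ (2 * b) * z := fun i hi => by
    obtain ⟨j, hij⟩ := Nat.exists_eq_add_of_le (mem_range.1 hi).le
    have hj : 1 ≤ j := by
      have := mem_range.1 hi
      omega
    obtain ⟨z, hz, h⟩ := exists_bernoulli_mul_pow_div_eq hodd hb hj (hij.symm.trans hm)
    refine ⟨m.choose i * z, mul_mem (natCast_mem _ _) hz, ?_⟩
    rw [hij, mul_right_comm, mul_div_assoc, choose_succ_div_succ,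
      show i + j + 1 - i = j + 1 by omega, ← pow_mul]
    linear_combination ((i + j).choose i : ℚ_[p]) * h
  choose! f hf hterm using hterm
  refine ⟨∑ i ∈ range m, f i, sum_mem hf, ?_⟩
  have h := congrArg (Rat.cast : ℚ → ℚ_[p]) (sum_range_pow (p ^ b) m)
  push_cast at h
  rw [h, sum_range_succ, sum_congr rfl hterm, ← mul_sum, add_comm, Nat.add_sub_cancel_left,
    Nat.choose_succ_self_right, pow_one, Nat.cast_add_one]
  have hm0 := Nat.cast_add_one_ne_zero (R := ℚ_[p]) m
  field_simp

end Faulhaber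

section WilsonQuotient

theorem sq_dvd_prod_one_add_sub {ι R : Type*} [CommRing R] {t : R} (s : Finset ι) (g : ι → R) :
    t ^ 2 ∣ ∏ k ∈ s, (1 + t * g k) - (1 + t * ∑ k ∈ s, g k) := by
  classical
  induction s using Finset.induction_on with
  | empty => simp
  | insert a s ha ih =>
    obtain ⟨y, hy⟩ := ih
    rw [prod_insert ha, sum_insert ha]
    exact ⟨y * (1 + t * g a) + g a * ∑ k ∈ s, g k, by linear_combination (1 + t * g a) * hy⟩

theorem sum_coprime_pow_totient_modEq (N : ℕ) :
    ∑ k ∈ range N with N.Coprime k, (k : ℤ) ^ N.totient ≡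
      N.totient - 1 + (∏ k ∈ range N with N.Coprime k, (k : ℤ)) ^ N.totient
      [ZMOD (N : ℤ) ^ 2] := by
  have heuler : ∀ k ∈ {k ∈ range N | N.Coprime k}, ∃ g : ℤ, (k : ℤ) ^ N.totient = 1 + N * g := by
    intro k hk
    have h := Int.natCast_modEq_iff.2 (Nat.ModEq.pow_totient (mem_filter.1 hk).2.symm)
    obtain ⟨g, hg⟩ := Int.modEq_iff_dvd.1 h.symm
    push_cast at hg
    exact ⟨g, by linear_combination hg⟩
  choose! g hg using heuler
  rw [← prod_pow, prod_congr rfl hg, sum_congr rfl hg, sum_add_distrib, ← mul_sum, sum_const,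
    ← Nat.totient_eq_card_coprime, nsmul_one, Int.modEq_iff_dvd]
  obtain ⟨y, hy⟩ := sq_dvd_prod_one_add_sub (t := (N : ℤ)) {k ∈ range N | N.Coprime k} g
  exact ⟨y, by linear_combination hy⟩

theorem sum_range_pow_modEq_sum_coprime {p b c m : ℕ} (hp : p.Prime) (hb : b ≠ 0) (hm : c ≤ m) :
    ∑ k ∈ range (p ^ b), (k : ℤ) ^ m ≡ ∑ k ∈ range (p ^ b) with (p ^ b).Coprime k, (k : ℤ) ^ m
      [ZMOD (p : ℤ) ^ c] := by
  rw [sum_filter]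
  refine Int.ModEq.sum fun k _ => ?_
  split_ifs with h
  · rfl
  · rw [Nat.coprime_pow_left_iff (Nat.pos_of_ne_zero hb), hp.coprime_iff_not_dvd, not_not] at h
    exact Int.modEq_zero_iff_dvd.2
      ((pow_dvd_pow _ hm).trans (pow_dvd_pow_of_dvd (Int.natCast_dvd_natCast.2 h) m))

variable {p : ℕ} [Fact p.Prime]

theorem unitFactorial_pow_eq_prod_coprime {b : ℕ} (hb : 1 ≤ b) :
    unitFactorial p (p ^ b) = ∏ k ∈ range (p ^ b) with (p ^ b).Coprime k, k := by
  rw [unitFactorial_pow_eq_prod_range p hb, prod_filter]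
  refine prod_congr rfl fun k _ => ?_
  simp only [unitPart, Nat.coprime_pow_left_iff (show 0 < b by omega),
    (Fact.out : p.Prime).coprime_iff_not_dvd, ite_not]

theorem unitFactorial_pow_pow_modEq (hodd : Odd p) {b m : ℕ} (hb : 1 ≤ b) (hm : Even m) :
    (unitFactorial p (p ^ b) : ℤ) ^ m ≡ 1 - m * (unitFactorial p (p ^ b) + 1)
      [ZMOD ((p : ℤ) ^ b) ^ 2] := by
  obtain ⟨w, hw⟩ := pow_dvd_unitFactorial_pow_add_one hodd hb
  obtain ⟨y, hy⟩ := Polynomial.powAddExpansion (1 : ℤ) (-((p : ℤ) ^ b * w)) m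
  have hpow : (unitFactorial p (p ^ b) : ℤ) ^ m = (1 + -((p : ℤ) ^ b * w)) ^ m := by
    rw [← hm.neg_pow]
    congr 1
    linear_combination -hw
  rw [hpow, hy, hw, one_pow, one_pow]
  exact (Int.modEq_iff_dvd.2 ⟨y * w ^ 2, by ring⟩).symm

theorem sum_range_pow_totient_modEq (hodd : Odd p) {b : ℕ} (hb : 1 ≤ b) :
    ∑ k ∈ range (p ^ b), (k : ℤ) ^ (p ^ b).totient ≡
      -(p ^ b).totient * unitFactorial p (p ^ b) [ZMOD (p : ℤ) ^ (2 * b)] := by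
  have hp := (Fact.out : p.Prime)
  have h3 : 3 ≤ p := hp.odd_iff.1 hodd
  have htotient : 2 * b ≤ (p ^ b).totient := by
    have h : b - 1 < p ^ (b - 1) := Nat.lt_pow_self hp.one_lt
    rw [Nat.totient_prime_pow hp hb, mul_comm]
    exact Nat.mul_le_mul (by omega) (by omega)
  have heven : Even (p ^ b).totient :=
    Nat.totient_even (lt_of_lt_of_le (by omega) (Nat.le_self_pow (by omega) p))
  have hprod : ∏ k ∈ range (p ^ b) with (p ^ b).Coprime k, (k : ℤ) = unitFactorial p (p ^ b) := by
    rw [unitFactorial_pow_eq_prod_coprime hb, Nat.cast_prod]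
  have hcoprime := sum_coprime_pow_totient_modEq (p ^ b)
  have hwilson := unitFactorial_pow_pow_modEq hodd hb heven
  rw [hprod, Nat.cast_pow, ← pow_mul'] at hcoprime
  rw [← pow_mul'] at hwilson
  calc ∑ k ∈ range (p ^ b), (k : ℤ) ^ (p ^ b).totient
    _ ≡ ∑ k ∈ range (p ^ b) with (p ^ b).Coprime k, (k : ℤ) ^ (p ^ b).totient
        [ZMOD (p : ℤ) ^ (2 * b)] :=
      sum_range_pow_modEq_sum_coprime hp (by omega) htotient
    _ ≡ (p ^ b).totient - 1 + unitFactorial p (p ^ b) ^ (p ^ b).totient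
        [ZMOD (p : ℤ) ^ (2 * b)] := hcoprime
    _ ≡ (p ^ b).totient - 1 + (1 - (p ^ b).totient * (unitFactorial p (p ^ b) + 1))
        [ZMOD (p : ℤ) ^ (2 * b)] := hwilson.add_left _
    _ = -(p ^ b).totient * unitFactorial p (p ^ b) := by ring

theorem exists_prime_mul_bernoulli_totient_eq (hodd : Odd p) {b : ℕ} (hb : 1 ≤ b) :
    ∃ z ∈ PadicInt.subring p, (p : ℚ_[p]) * ((bernoulli (Nat.totient (p ^ b)) : ℚ) : ℚ_[p]) =
      p + unitFactorial p (p ^ b) + (p : ℚ_[p]) ^ (b + 1) * z := by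
  have hp := (Fact.out : p.Prime)
  obtain ⟨z, hz, hsum⟩ := exists_sum_range_pow_eq hodd hb
  obtain ⟨y, hy⟩ := Int.modEq_iff_dvd.1 (sum_range_pow_totient_modEq hodd hb)
  obtain ⟨w, hw⟩ := pow_dvd_unitFactorial_pow_add_one hodd hb
  replace hy := congrArg (Int.cast : ℤ → ℚ_[p]) hy
  replace hw := congrArg (Int.cast : ℤ → ℚ_[p]) hw
  rw [Nat.totient_prime_pow hp (by omega)] at hy ⊢
  push_cast [Nat.cast_sub hp.one_le] at hy hw
  rw [hsum] at hy
  obtain ⟨c, rfl⟩ := Nat.exists_eq_add_of_le' hb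
  rw [Nat.add_sub_cancel] at hy ⊢
  refine ⟨-z - y - w, sub_mem (sub_mem (neg_mem hz) (intCast_mem _ _)) (intCast_mem _ _), ?_⟩
  refine mul_left_cancel₀ (pow_ne_zero c (Nat.cast_ne_zero.2 hp.ne_zero : (p : ℚ_[p]) ≠ 0)) ?_
  linear_combination -hy - (p : ℚ_[p]) ^ c * p * hw

end WilsonQuotient

section HarmonicExpansion

variable {p : ℕ} [Fact p.Prime]

theorem padicInt_dvd_sub_of_toZMod_eq {x y : ℤ_[p]} (h : PadicInt.toZMod x = PadicInt.toZMod y) :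
    (p : ℤ_[p]) ∣ x - y := by
  rw [← Ideal.mem_span_singleton, ← PadicInt.maximalIdeal_eq_span_p, ← PadicInt.ker_toZMod,
    RingHom.mem_ker, map_sub, h, sub_self]

theorem padicInt_inv_of_norm_ne_one {z : ℤ_[p]} (hz : ‖z‖ ≠ 1) : z.inv = 0 := by
  unfold PadicInt.inv
  exact dif_neg hz

theorem coe_padicInt_inv {z : ℤ_[p]} (hz : ‖z‖ = 1) : (z.inv : ℚ_[p]) = (z : ℚ_[p])⁻¹ :=
  eq_inv_of_mul_eq_one_right (by rw [← PadicInt.coe_mul, PadicInt.mul_inv hz, PadicInt.coe_one])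

theorem toZMod_padicInt_inv (z : ℤ_[p]) : PadicInt.toZMod z.inv = (PadicInt.toZMod z)⁻¹ := by
  by_cases hz : ‖z‖ = 1
  · exact eq_inv_of_mul_eq_one_right (by rw [← map_mul, PadicInt.mul_inv hz, map_one])
  · have hz0 : PadicInt.toZMod z = 0 := by
      rw [← RingHom.mem_ker, PadicInt.ker_toZMod, IsLocalRing.mem_maximalIdeal,
        PadicInt.mem_nonunits]
      exact lt_of_le_of_ne z.norm_le_one hz
    rw [padicInt_inv_of_norm_ne_one hz, hz0, map_zero, inv_zero]

theorem norm_natCast_padicInt_eq_one_iff {k : ℕ} : ‖(k : ℤ_[p])‖ = 1 ↔ ¬ p ∣ k := by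
  rw [PadicInt.norm_natCast_eq_one_iff, Nat.Prime.coprime_iff_not_dvd Fact.out]

theorem unitPart_pow_add {b : ℕ} (hb : 1 ≤ b) (k : ℕ) :
    (unitPart p (p ^ b + k) : ℤ_[p]) =
      unitPart p k * (1 + (p : ℤ_[p]) ^ b * (k : ℤ_[p]).inv) := by
  have hdvd : p ∣ p ^ b + k ↔ p ∣ k := Nat.dvd_add_right (dvd_pow_self p (by omega))
  by_cases hk : p ∣ k
  · rw [padicInt_inv_of_norm_ne_one (mt norm_natCast_padicInt_eq_one_iff.1 (not_not_intro hk))]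
    simp [unitPart, hdvd, hk]
  · simp only [unitPart, hdvd, hk, if_false]
    push_cast
    linear_combination -(p : ℤ_[p]) ^ b *
      PadicInt.mul_inv (norm_natCast_padicInt_eq_one_iff.2 hk)

theorem unitFactorial_add (p m n : ℕ) : unitFactorial p (n + m) =
    unitFactorial p n * ∏ k ∈ range m, unitPart p (n + (k + 1)) := by
  induction m with
  | zero => simp
  | succ m ih => rw [← add_assoc, unitFactorial_succ, ih, prod_range_succ, mul_assoc, add_assoc]

theorem pow_succ_dvd_unitFactorial_add_pow_sub {b : ℕ} (hb : 1 ≤ b) (m : ℕ) :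
    (p : ℤ_[p]) ^ (b + 1) ∣ unitFactorial p (m + p ^ b) - unitFactorial p (p ^ b) *
      unitFactorial p m * (1 + (p : ℤ_[p]) ^ b * ∑ k ∈ range m, ((k + 1 : ℕ) : ℤ_[p]).inv) := by
  have hprod : (unitFactorial p (m + p ^ b) : ℤ_[p]) = unitFactorial p (p ^ b) *
      unitFactorial p m * ∏ k ∈ range m, (1 + (p : ℤ_[p]) ^ b * ((k + 1 : ℕ) : ℤ_[p]).inv) := by
    have hm := unitFactorial_add p m 0
    rw [zero_add, unitFactorial_zero, one_mul] at hm
    rw [add_comm, unitFactorial_add, hm, mul_assoc]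
    simp only [Nat.cast_mul, Nat.cast_prod, unitPart_pow_add hb, zero_add, prod_mul_distrib]
  rw [hprod, ← mul_sub]
  refine dvd_mul_of_dvd_right ((pow_dvd_pow _ ?_).trans
    (pow_mul (p : ℤ_[p]) b 2 ▸ sq_dvd_prod_one_add_sub _ _)) _
  omega

theorem sum_range_prime_inv_zmod (hodd : Odd p) :
    ∑ k ∈ range p, ((k + 1 : ℕ) : ZMod p)⁻¹ = 0 := by
  have hp : p - 1 + 1 = p := Nat.sub_add_cancel NeZero.one_le
  have htrunc : ∑ k ∈ range p, ((k + 1 : ℕ) : ZMod p)⁻¹ =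
      ∑ k ∈ range (p - 1), ((k + 1 : ℕ) : ZMod p)⁻¹ := by
    conv_lhs => arg 1; rw [← hp]
    rw [sum_range_succ, hp, ZMod.natCast_self, inv_zero, add_zero]
  have hreflect : ∑ k ∈ range (p - 1), ((k + 1 : ℕ) : ZMod p)⁻¹ =
      -∑ k ∈ range (p - 1), ((k + 1 : ℕ) : ZMod p)⁻¹ := by
    conv_lhs => rw [← sum_range_reflect]
    rw [← sum_neg_distrib]
    refine sum_congr rfl fun k hk => ?_
    have hk' := mem_range.1 hk
    rw [← inv_neg, inv_inj, eq_neg_iff_add_eq_zero, ← Nat.cast_add, ZMod.natCast_eq_zero_iff,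
      show p - 1 - 1 - k + 1 + (k + 1) = p by omega]
  have h2 : ((2 : ℕ) : ZMod p) ≠ 0 :=
    natCast_zmod_ne_zero two_ne_zero ((Nat.Prime.odd_iff Fact.out).1 hodd)
  rw [htrunc]
  refine mul_left_cancel₀ h2 ?_
  push_cast at hreflect ⊢
  linear_combination hreflect

theorem sum_range_add_mul_inv_zmod (hodd : Odd p) (m i : ℕ) :
    ∑ k ∈ range (m + i * p), ((k + 1 : ℕ) : ZMod p)⁻¹ =
      ∑ k ∈ range m, ((k + 1 : ℕ) : ZMod p)⁻¹ := by
  induction i with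
  | zero => simp
  | succ i ih =>
    rw [show m + (i + 1) * p = p + (m + i * p) by ring, sum_range_add,
      sum_range_prime_inv_zmod hodd, zero_add, ← ih]
    simp [add_assoc]

theorem pow_succ_dvd_unitFactorial_add_mul_pow_sub (hodd : Odd p) {b : ℕ} (hb : 1 ≤ b) (m i : ℕ) :
    (p : ℤ_[p]) ^ (b + 1) ∣ unitFactorial p (m + i * p ^ b) - unitFactorial p (p ^ b) ^ i *
      unitFactorial p m * (1 + i * (p : ℤ_[p]) ^ b * ∑ k ∈ range m, ((k + 1 : ℕ) : ℤ_[p]).inv) := by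
  set h := ∑ k ∈ range m, ((k + 1 : ℕ) : ℤ_[p]).inv with hh
  induction i with
  | zero => simp
  | succ i ih =>
    obtain ⟨y₁, hy₁⟩ := pow_succ_dvd_unitFactorial_add_pow_sub (p := p) hb (m + i * p ^ b)
    obtain ⟨y₂, hy₂⟩ := ih
    obtain ⟨t, ht⟩ : (p : ℤ_[p]) ∣ ∑ k ∈ range (m + i * p ^ b), ((k + 1 : ℕ) : ℤ_[p]).inv - h := by
      refine padicInt_dvd_sub_of_toZMod_eq ?_
      simp only [hh, map_sum, toZMod_padicInt_inv, map_natCast]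
      rw [← sum_range_add_mul_inv_zmod hodd m (i * p ^ (b - 1)), mul_assoc, ← pow_succ,
        Nat.sub_add_cancel hb]
    obtain ⟨c, rfl⟩ := Nat.exists_eq_add_of_le' hb
    rw [show m + (i + 1) * p ^ (c + 1) = m + i * p ^ (c + 1) + p ^ (c + 1) by ring]
    set G := (unitFactorial p (m + i * p ^ (c + 1)) : ℤ_[p])
    set W := (unitFactorial p (p ^ (c + 1)) : ℤ_[p])
    refine ⟨y₁ + W * G * t + W * (1 + (p : ℤ_[p]) ^ (c + 1) * h) * y₂ +
      W ^ (i + 1) * unitFactorial p m * i * h ^ 2 * (p : ℤ_[p]) ^ c, ?_⟩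
    push_cast
    linear_combination hy₁ + W * G * (p : ℤ_[p]) ^ (c + 1) * ht +
      W * (1 + (p : ℤ_[p]) ^ (c + 1) * h) * hy₂

end HarmonicExpansion

section ModPrimePowers

variable {p : ℕ}

theorem neg_one_pow_eq_of_modEq_sub_one (hodd : Odd p) {R : Type*} [Ring R] {a n : ℕ}
    (h : a ≡ n [MOD (p - 1)]) : (-1 : R) ^ n = (-1) ^ a :=
  pow_eq_pow_of_modEq (h.symm.of_dvd (Nat.Odd.sub_odd hodd odd_one).two_dvd) neg_one_sq

theorem pow_dvd_of_pow_dvd_sub_one_mul {c : ℕ} {x : ℤ} (h : (p : ℤ) ^ c ∣ (p - 1) * x) :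
    (p : ℤ) ^ c ∣ x :=
  (IsCoprime.pow_left (⟨1, -1, by ring⟩ : IsCoprime (p : ℤ) (p - 1))).dvd_of_dvd_mul_left h

variable [Fact p.Prime]

theorem pow_modEq_pow_of_modEq_sub_one {z : ℤ} (hz : ¬ (p : ℤ) ∣ z) {a n : ℕ}
    (h : a ≡ n [MOD (p - 1)]) : z ^ n ≡ z ^ a [ZMOD p] := by
  rw [← ZMod.intCast_eq_intCast_iff]
  push_cast
  refine pow_eq_pow_of_modEq h.symm (ZMod.pow_card_sub_one_eq_one ?_)
  rwa [Ne, ZMod.intCast_zmod_eq_zero_iff_dvd]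

theorem pow_succ_dvd_mul_pow_sub_one_sub_one {r : ℤ} (hr : ¬ (p : ℤ) ∣ r) {c n : ℕ}
    (hn : p ^ c ∣ n) : (p : ℤ) ^ (c + 1) ∣ n * (r ^ (p - 1) - 1) := by
  rw [pow_succ]
  exact mul_dvd_mul (mod_cast hn) (prime_dvd_pow_sub_one_sub_one hr)

theorem pow_sub_one_pow_modEq (hodd : Odd p) {r : ℤ} (hr : ¬ (p : ℤ) ∣ r) {c E : ℕ}
    (hE : p ^ c ∣ E) :
    (r ^ (p - 1)) ^ E ≡ 1 + E * (r ^ (p - 1) - 1) [ZMOD (p : ℤ) ^ (c + 2)] := by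
  obtain ⟨s, hs⟩ := prime_dvd_pow_sub_one_sub_one hr
  obtain ⟨m, rfl⟩ := hE
  obtain ⟨y, hy⟩ := pow_add_two_dvd_one_add_mul_pow_sub hodd s c m
  rw [hs, show r ^ (p - 1) = 1 + p * s by linear_combination hs]
  refine (Int.modEq_iff_dvd.2 ⟨y, ?_⟩).symm
  push_cast
  linear_combination hy

theorem pow_modEq_pow_mul_one_add (hodd : Odd p) {r : ℤ} (hr : ¬ (p : ℤ) ∣ r) {c n N : ℕ}
    (hn : p ^ c ∣ n) (hN : p ^ (c + 1) ∣ N) (hnN : n ≤ N) (h : n ≡ N [MOD (p - 1)]) :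
    r ^ N ≡ r ^ n * (1 + n * (r ^ (p - 1) - 1)) [ZMOD (p : ℤ) ^ (c + 2)] := by
  obtain ⟨E, hE⟩ := (Nat.modEq_iff_dvd' hnN).1 h
  obtain rfl : N = n + (p - 1) * E := by omega
  have hEn : (E : ℤ) ≡ n [ZMOD (p : ℤ) ^ (c + 1)] := by
    refine (Int.modEq_iff_dvd.2 (pow_dvd_of_pow_dvd_sub_one_mul ?_)).symm
    have hN' : (p : ℤ) ^ (c + 1) ∣ n + (p - 1) * E := by
      rw [← Nat.cast_pred (NeZero.pos p)]
      exact_mod_cast hN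
    have hpn : (p : ℤ) ^ (c + 1) ∣ p * n := by
      rw [pow_succ']
      exact mul_dvd_mul_left _ (mod_cast hn)
    rw [show ((p : ℤ) - 1) * (E - n) = n + (p - 1) * E - p * n by ring]
    exact dvd_sub hN' hpn
  have hE' : p ^ c ∣ E := by
    have h := (Int.natCast_modEq_iff (n := p ^ (c + 1))).1 (mod_cast hEn)
    exact (h.of_dvd (pow_dvd_pow p c.le_succ)).symm.dvd_iff dvd_rfl |>.1 hn
  have hmul : (E : ℤ) * (r ^ (p - 1) - 1) ≡ n * (r ^ (p - 1) - 1) [ZMOD (p : ℤ) ^ (c + 2)] := by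
    refine (hEn.mul_right' (c := r ^ (p - 1) - 1)).of_dvd ?_
    rw [pow_succ]
    exact mul_dvd_mul_left _ (prime_dvd_pow_sub_one_sub_one hr)
  rw [pow_add r, pow_mul r]
  exact ((pow_sub_one_pow_modEq hodd hr hE').trans (hmul.add_left 1)).mul_left _

theorem pow_modEq_pow_mul_one_sub (hodd : Odd p) {r : ℤ} (hr : ¬ (p : ℤ) ∣ r) {c n N : ℕ}
    (hn : p ^ c ∣ n) (hN : p ^ (c + 1) ∣ N) (hnN : n ≤ N) (h : n ≡ N [MOD (p - 1)]) :
    r ^ n ≡ r ^ N * (1 - n * (r ^ (p - 1) - 1)) [ZMOD (p : ℤ) ^ (c + 2)] := by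
  obtain ⟨s, hs⟩ := pow_succ_dvd_mul_pow_sub_one_sub_one hr hn
  obtain ⟨y, hy⟩ := Int.modEq_iff_dvd.1 (pow_modEq_pow_mul_one_add hodd hr hn hN hnN h)
  refine Int.modEq_iff_dvd.2 ⟨-y * (1 - n * (r ^ (p - 1) - 1)) - r ^ n * p ^ c * s ^ 2, ?_⟩
  linear_combination (n * (r ^ (p - 1) - 1) - 1) * hy -
    r ^ n * (n * (r ^ (p - 1) - 1) + (p : ℤ) ^ (c + 1) * s) * hs

end ModPrimePowers

section FleckQuotientExpansion

open Polynomial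

variable {p : ℕ} [Fact p.Prime]

theorem pow_dvd_sub_repdigit_add {a n c e : ℕ} (hn : p ^ c ∣ n)
    (he : p * n = a + (p - 1) * e) :
    (p : ℤ) ^ (c + 2) ∣ (e - repdigit p a (c + 2)) + p * n := by
  have hZ := congrArg (Nat.cast : ℕ → ℤ) (sub_one_mul_repdigit_add (p := p) NeZero.one_le a (c + 2))
  have he' := congrArg (Nat.cast : ℕ → ℤ) he
  push_cast [Nat.cast_pred (NeZero.pos p)] at hZ he'
  obtain ⟨m, rfl⟩ := hn
  refine pow_dvd_of_pow_dvd_sub_one_mul ⟨m - a, ?_⟩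
  push_cast at he' ⊢
  linear_combination -he' - hZ

theorem residueSum_fleckUnit_pow_modEq (hodd : Odd p) {a n c e : ℕ} (hn : p ^ c ∣ n)
    (he : p * n = a + (p - 1) * e) (r : ℤ) :
    residueSum ℤ p r ((1 - X) ^ a * fleckUnit p ^ e) ≡
      residueSum ℤ p r ((1 - X) ^ a * fleckUnit p ^ repdigit p a (c + 2)) -
        p * n * residueSum ℤ p r ((1 - X) ^ a * fleckUnit p ^ repdigit p a (c + 2) *
          fermatQuotient p (fleckUnit p)) [ZMOD (p : ℤ) ^ (c + 2)] := by
  obtain ⟨y, hy⟩ := pow_dvd_sub_repdigit_add hn he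
  have he0 : e ≡ repdigit p a (c + 2) [MOD p ^ (c + 1)] := by
    obtain ⟨m, rfl⟩ := hn
    rw [← Int.natCast_modEq_iff]
    refine (Int.modEq_iff_dvd.2 ⟨p * y - m, ?_⟩).symm
    push_cast at hy ⊢
    linear_combination hy
  refine (residueSum_mul_pow_modEq hodd (eval_one_fleckUnit p) _ he0 r).trans
    (Int.modEq_iff_dvd.2 ⟨-y * residueSum ℤ p r ((1 - X) ^ a *
      fleckUnit p ^ repdigit p a (c + 2) * fermatQuotient p (fleckUnit p)), ?_⟩)
  linear_combination -residueSum ℤ p r ((1 - X) ^ a *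
    fleckUnit p ^ repdigit p a (c + 2) * fermatQuotient p (fleckUnit p)) * hy

theorem neg_pow_mul_residueSum_repdigit_modEq (hodd : Odd p) {a n c : ℕ} (ha : 1 ≤ a)
    (hap : a < p - 1) (hn : p ^ c ∣ n) (han : a ≡ n [MOD (p - 1)]) {r : ℤ}
    (hr : ¬ (p : ℤ) ∣ r) :
    (-r) ^ n * residueSum ℤ p r ((1 - X) ^ a * fleckUnit p ^ repdigit p a (c + 2)) ≡
      -(-1) ^ (a * (c + 1)) * unitFactorial p (repdigit p a (c + 2)) *
        (1 - n * (r ^ (p - 1) - 1)) [ZMOD (p : ℤ) ^ (c + 2)] := by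
  set D := repdigit p a (c + 2) + n
  have hval := residueSum_fleckUnit_repdigit hodd (c := c + 1) ha hap hr
    (show repdigit p a (c + 2) ≤ D from Nat.le_add_right _ _)
  have hpow : r ^ n ≡ r ^ (a * p ^ (c + 2 + D)) * (1 - n * (r ^ (p - 1) - 1))
      [ZMOD (p : ℤ) ^ (c + 2)] := by
    refine pow_modEq_pow_mul_one_sub hodd hr hn ((pow_dvd_pow p (by omega)).mul_left a) ?_ ?_
    · have hD : c + 2 + D < p ^ (c + 2 + D) := Nat.lt_pow_self (Nat.Prime.one_lt Fact.out)
      exact (show n ≤ p ^ (c + 2 + D) by omega).trans (Nat.le_mul_of_pos_left _ ha)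
    · exact han.symm.trans (mul_prime_pow_modEq_sub_one a _).symm
  have hsign : (-1 : ℤ) ^ n * (-1) ^ (a * (c + 2)) = (-1) ^ (a * (c + 1)) := by
    rw [neg_one_pow_eq_of_modEq_sub_one hodd han, ← pow_add,
      show a + a * (c + 2) = 2 * a + a * (c + 1) by ring, pow_add, pow_mul, neg_one_sq, one_pow,
      one_mul]
  set M := residueSum ℤ p r ((1 - X) ^ a * fleckUnit p ^ repdigit p a (c + 2))
  calc (-r) ^ n * M = (-1) ^ n * M * r ^ n := by rw [neg_pow]; ring
    _ ≡ (-1) ^ n * M * (r ^ (a * p ^ (c + 2 + D)) * (1 - n * (r ^ (p - 1) - 1)))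
        [ZMOD (p : ℤ) ^ (c + 2)] := hpow.mul_left _
    _ = M * r ^ (a * p ^ (c + 2 + D)) * ((-1) ^ n * (1 - n * (r ^ (p - 1) - 1))) := by ring
    _ ≡ -(-1) ^ (a * (c + 2)) * unitFactorial p (repdigit p a (c + 2)) *
        ((-1) ^ n * (1 - n * (r ^ (p - 1) - 1))) [ZMOD (p : ℤ) ^ (c + 2)] := hval.mul_right _
    _ = _ := by
      rw [← hsign]
      ring

theorem neg_pow_mul_residueSum_modEq (hodd : Odd p) {a n c e : ℕ} (ha : 1 ≤ a)
    (hap : a < p - 1) (hn : p ^ c ∣ n) (han : a ≡ n [MOD (p - 1)])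
    (he : p * n = a + (p - 1) * e) {r : ℤ} (hr : ¬ (p : ℤ) ∣ r) :
    (-r) ^ n * residueSum ℤ p r ((1 - X) ^ a * fleckUnit p ^ e) ≡
      -(-1) ^ (a * (c + 1)) * unitFactorial p (repdigit p a (c + 2)) *
          (1 - n * (r ^ (p - 1) - 1)) -
        p * n * ((-r) ^ a * residueSum ℤ p r ((1 - X) ^ a * fleckUnit p ^ repdigit p a (c + 2) *
          fermatQuotient p (fleckUnit p))) [ZMOD (p : ℤ) ^ (c + 2)] := by
  have hexp := (residueSum_fleckUnit_pow_modEq hodd hn he r).mul_left ((-r) ^ n)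
  have hmain := neg_pow_mul_residueSum_repdigit_modEq hodd ha hap hn han hr
  set Y := residueSum ℤ p r ((1 - X) ^ a * fleckUnit p ^ repdigit p a (c + 2) *
    fermatQuotient p (fleckUnit p))
  have hcorr : p * n * ((-r) ^ n * Y) ≡ p * n * ((-r) ^ a * Y) [ZMOD (p : ℤ) ^ (c + 2)] := by
    refine (((pow_modEq_pow_of_modEq_sub_one (z := -r) (by rwa [dvd_neg]) han).mul_right
      Y).mul_left' (c := p * n)).of_dvd ?_
    rw [show c + 2 = 1 + c + 1 by ring, pow_succ, pow_add, pow_one]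
    exact mul_dvd_mul_right (mul_dvd_mul_left _ (mod_cast hn)) _
  refine hexp.trans ?_
  rw [mul_sub, mul_left_comm]
  exact hmain.sub hcorr

end FleckQuotientExpansion

section PadicBernoulli

variable {p : ℕ} [Fact p.Prime]

/-- The Bernoulli number `bernoulli k` as a `p`-adic integer, for the indices `k` at which it is
`p`-integral, such as `k < p - 1`; it is `0` at the others. -/
noncomputable def padicBernoulli (p : ℕ) [Fact p.Prime] (k : ℕ) : ℤ_[p] :=
  if h : ‖((bernoulli k : ℚ) : ℚ_[p])‖ ≤ 1 then ⟨_, h⟩ else 0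

theorem coe_padicBernoulli {k : ℕ} (hk : k + 1 < p) :
    (padicBernoulli p k : ℚ_[p]) = (bernoulli k : ℚ) :=
  congrArg Subtype.val (dif_pos (bernoulli_mem_padicInt k hk))

theorem neg_one_pow_mul_padicBernoulli {k : ℕ} (hk : 1 < k) (hkp : k + 1 < p) :
    (-1) ^ k * padicBernoulli p k = padicBernoulli p k := by
  rcases Nat.even_or_odd k with h | h
  · rw [h.neg_one_pow, one_mul]
  · have h0 : padicBernoulli p k = 0 := PadicInt.ext (by
      rw [coe_padicBernoulli hkp, bernoulli_eq_zero_of_odd h hk, Rat.cast_zero, PadicInt.coe_zero])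
    rw [h0, mul_zero]

theorem sum_choose_mul_toZMod_padicBernoulli {m : ℕ} (hm : m < p) :
    ∑ k ∈ range m, (m.choose k : ZMod p) * PadicInt.toZMod (padicBernoulli p k) =
      if m = 1 then 1 else 0 := by
  have hrec : ∑ k ∈ range m, (m.choose k : ℤ_[p]) * padicBernoulli p k =
      if m = 1 then 1 else 0 := by
    have h := congrArg (Rat.cast : ℚ → ℚ_[p]) (sum_bernoulli m)
    push_cast [apply_ite (Rat.cast : ℚ → ℚ_[p])] at h
    refine PadicInt.ext ?_
    rw [show ((if m = 1 then 1 else 0 : ℤ_[p]) : ℚ_[p]) = if m = 1 then 1 else 0 by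
      split_ifs <;> rfl, ← h, PadicInt.coe_sum]
    refine sum_congr rfl fun k hk => ?_
    rw [PadicInt.coe_mul, PadicInt.coe_natCast,
      coe_padicBernoulli (by have := mem_range.1 hk; omega)]
  have h := congrArg PadicInt.toZMod hrec
  simpa [apply_ite (PadicInt.toZMod : ℤ_[p] → ZMod p)] using h

/-- The sum `∑ binom(a + k, a) B_k / (k r ^ k)` over `2 ≤ k < p - a` as a `p`-adic integer. -/
noncomputable def padicBernoulliSum (p : ℕ) [Fact p.Prime] (a : ℕ) (r : ℤ) : ℤ_[p] :=
  ∑ k ∈ Icc 2 (p - a - 1),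
    ((a + k).choose a : ℤ_[p]) * padicBernoulli p k * (k : ℤ_[p]).inv * (r : ℤ_[p]).inv ^ k

theorem norm_intCast_padicInt_eq_one {r : ℤ} (hr : ¬ (p : ℤ) ∣ r) : ‖(r : ℤ_[p])‖ = 1 :=
  le_antisymm (PadicInt.norm_le_one _)
    (not_lt.1 (mt (PadicInt.norm_int_lt_one_iff_dvd r).1 hr))

theorem coe_padicBernoulliSum {a : ℕ} (ha : 1 ≤ a) {r : ℤ} (hr : ¬ (p : ℤ) ∣ r) :
    (padicBernoulliSum p a r : ℚ_[p]) = ((∑ k ∈ Icc 2 (p - a - 1),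
      (((a + k).choose a : ℕ) : ℚ) * bernoulli k / ((k : ℚ) * (r : ℚ) ^ k) : ℚ) : ℚ_[p]) := by
  rw [padicBernoulliSum, PadicInt.coe_sum]
  push_cast
  refine sum_congr rfl fun k hk => ?_
  obtain ⟨hk2, hkp⟩ := mem_Icc.1 hk
  rw [coe_padicBernoulli (by omega), coe_padicInt_inv (norm_intCast_padicInt_eq_one hr),
    coe_padicInt_inv (norm_natCast_padicInt_eq_one_iff.2
      (Nat.not_dvd_of_pos_of_lt (by omega) (by omega))),
    PadicInt.coe_natCast, PadicInt.coe_intCast, div_eq_mul_inv, mul_inv, inv_pow, mul_assoc]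

theorem natCast_add_factorial_mul_inv_factorial {a k : ℕ} (hk : k < p) :
    ((a + k).factorial : ZMod p) * (k.factorial : ZMod p)⁻¹ =
      a.factorial * (a + k).choose a := by
  rw [mul_inv_eq_iff_eq_mul₀ (natCast_factorial_zmod_ne_zero hk),
    ← Nat.add_choose_mul_factorial_mul_factorial a k, Nat.choose_symm_add]
  push_cast
  ring

theorem neg_pow_mul_residueSum_truncLog_pow_mul_fermatQuotient (hodd : Odd p) {a : ℕ}
    (ha : 1 ≤ a) (hap : a ≤ p - 1) {r : ℤ} (hr : (r : ZMod p) ≠ 0) :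
    (-(r : ZMod p)) ^ a * residueSum (ZMod p) p r (truncLog p ^ a * fleckUnitFermatQuotient p) =
      PadicInt.toZMod ((a.factorial : ℤ_[p]) * padicBernoulliSum p a r) := by
  rw [residueSum_truncLog_pow_mul_fermatQuotient hodd
    (fun m hm => sum_choose_mul_toZMod_padicBernoulli hm) hr ha hap, padicBernoulliSum, mul_sum,
    mul_sum, map_sum]
  symm
  refine sum_subset_zero_on_sdiff (fun k hk => ?_) (fun k hk => ?_) (fun k hk => ?_)
  · simp only [mem_Icc, mem_Ico] at hk ⊢
    omega
  · simp only [mem_sdiff, mem_Icc, mem_Ico] at hk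
    rw [(ZMod.natCast_eq_zero_iff _ p).2 ((Nat.Prime.dvd_factorial Fact.out).2 (by omega))]
    ring
  · obtain ⟨hk2, hkp⟩ := mem_Icc.1 hk
    have hparity := congrArg PadicInt.toZMod
      (neg_one_pow_mul_padicBernoulli (p := p) (k := k) (by omega) (by omega))
    have hfac := natCast_add_factorial_mul_inv_factorial (p := p) (a := a) (k := k) (by omega)
    have hcancel : (-(r : ZMod p)) ^ a * (-(r : ZMod p)⁻¹) ^ a = 1 := by
      rw [← mul_pow, neg_mul_neg, mul_inv_cancel₀ hr, one_pow]
    simp only [map_mul, map_pow, map_neg, map_one, map_natCast, map_intCast,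
      toZMod_padicInt_inv] at hparity ⊢
    rw [inv_neg, mul_inv, pow_add, neg_pow (r : ZMod p)⁻¹ k]
    linear_combination
      -(PadicInt.toZMod (padicBernoulli p k) * (a + k).factorial * (k.factorial : ZMod p)⁻¹ *
        (k : ZMod p)⁻¹ * (-1) ^ k * (r : ZMod p)⁻¹ ^ k) * hcancel -
      (PadicInt.toZMod (padicBernoulli p k) * (k : ZMod p)⁻¹ * (-1) ^ k * (r : ZMod p)⁻¹ ^ k) *
        hfac -
      (a.factorial * (a + k).choose a * (k : ZMod p)⁻¹ * (r : ZMod p)⁻¹ ^ k) * hparity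

open Polynomial

theorem intCast_residueSum_fleckUnit_mul_fermatQuotient {a c : ℕ} (r : ℤ) :
    ((residueSum ℤ p r ((1 - X) ^ a * fleckUnit p ^ repdigit p a (c + 1) *
      fermatQuotient p (fleckUnit p)) : ℤ) : ZMod p) =
      residueSum (ZMod p) p r (truncLog p ^ a * fleckUnitFermatQuotient p) := by
  rw [← eq_intCast (Int.castRingHom (ZMod p)), ← residueSum_map]
  refine residueSum_eq_of_toCyclic_eq ?_ r
  simp only [Polynomial.map_mul, Polynomial.map_sub, Polynomial.map_one, map_X,
    Polynomial.map_pow, map_mul, map_pow, truncLog, mul_pow]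
  rw [← fleckUnitMod, ← fleckUnitFermatQuotient, repdigit_succ',
    pow_add (toCyclic p (fleckUnitMod p)), pow_mul (toCyclic p (fleckUnitMod p)),
    toCyclic_fleckUnitMod_pow_prime, one_pow, one_mul]

theorem prime_dvd_neg_pow_mul_residueSum_fermatQuotient_sub (hodd : Odd p) {a c : ℕ}
    (ha : 1 ≤ a) (hap : a ≤ p - 1) {r : ℤ} (hr : ¬ (p : ℤ) ∣ r) :
    (p : ℤ_[p]) ∣ (((-r) ^ a * residueSum ℤ p r ((1 - X) ^ a * fleckUnit p ^ repdigit p a (c + 1) *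
      fermatQuotient p (fleckUnit p)) : ℤ) : ℤ_[p]) - a.factorial * padicBernoulliSum p a r := by
  have hr0 : (r : ZMod p) ≠ 0 := by rwa [Ne, ZMod.intCast_zmod_eq_zero_iff_dvd]
  refine padicInt_dvd_sub_of_toZMod_eq ?_
  rw [← neg_pow_mul_residueSum_truncLog_pow_mul_fermatQuotient hodd ha hap hr0, map_intCast,
    ← intCast_residueSum_fleckUnit_mul_fermatQuotient (c := c)]
  push_cast
  rfl

end PadicBernoulli

section FleckQuotientCongruence

open Polynomial

variable {p : ℕ} [Fact p.Prime]

theorem pow_add_two_dvd_mul {c : ℕ} {x y : ℤ_[p]} (hx : (p : ℤ_[p]) ^ (c + 1) ∣ x)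
    (hy : (p : ℤ_[p]) ^ (c + 1) ∣ y) : (p : ℤ_[p]) ^ (c + 2) ∣ x * y := by
  refine (pow_dvd_pow _ ?_).trans (pow_add (p : ℤ_[p]) (c + 1) (c + 1) ▸ mul_dvd_mul hx hy)
  omega

theorem pow_succ_dvd_unitFactorial_pow_add_one_padicInt (hodd : Odd p) (c : ℕ) :
    (p : ℤ_[p]) ^ (c + 1) ∣ unitFactorial p (p ^ (c + 1)) + 1 := by
  have h := map_dvd (Int.castRingHom ℤ_[p])
    (pow_dvd_unitFactorial_pow_add_one hodd (Nat.le_add_left 1 c))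
  simpa using h

theorem pow_add_two_dvd_neg_unitFactorial_pow_sub (hodd : Odd p) (a c : ℕ) :
    (p : ℤ_[p]) ^ (c + 2) ∣ (-(unitFactorial p (p ^ (c + 1)) : ℤ_[p])) ^ a -
      (1 - a * (unitFactorial p (p ^ (c + 1)) + 1)) := by
  have hW := pow_succ_dvd_unitFactorial_pow_add_one_padicInt hodd c
  set W := (unitFactorial p (p ^ (c + 1)) : ℤ_[p])
  have hsq : (p : ℤ_[p]) ^ (c + 2) ∣ (-(W + 1)) ^ 2 := by
    rw [neg_sq, sq]
    exact pow_add_two_dvd_mul hW hW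
  refine hsq.trans ((sq_dvd_add_pow_sub_sub (-(W + 1)) 1 a).trans (dvd_of_eq ?_))
  rw [one_pow, one_pow, show 1 + -(W + 1) = -W by ring]
  ring

theorem pow_add_two_dvd_unitFactorial_repdigit_succ_sub (hodd : Odd p) (a c : ℕ) :
    (p : ℤ_[p]) ^ (c + 2) ∣ unitFactorial p (repdigit p a (c + 2)) -
      (-1) ^ a * unitFactorial p (repdigit p a (c + 1)) *
        (1 - (a * (unitFactorial p (p ^ (c + 1)) + 1) - (p : ℤ_[p]) ^ (c + 1) * a *
          ∑ k ∈ range a, ((k + 1 : ℕ) : ℤ_[p]).inv)) := by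
  set H := ∑ k ∈ range a, ((k + 1 : ℕ) : ℤ_[p]).inv
  set H' := ∑ k ∈ range (repdigit p a (c + 1)), ((k + 1 : ℕ) : ℤ_[p]).inv
  have hH : (p : ℤ_[p]) ∣ H' - H := by
    refine padicInt_dvd_sub_of_toZMod_eq ?_
    simp only [H, H', map_sum, toZMod_padicInt_inv, map_natCast]
    rw [repdigit_succ', add_comm, mul_comm p, sum_range_add_mul_inv_zmod hodd]
  have hstep := pow_succ_dvd_unitFactorial_add_mul_pow_sub hodd (Nat.le_add_left 1 c)
    (repdigit p a (c + 1)) a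
  rw [← repdigit_succ] at hstep
  have hW := pow_succ_dvd_unitFactorial_pow_add_one_padicInt hodd c
  have hpow := pow_add_two_dvd_neg_unitFactorial_pow_sub hodd a c
  set G := (unitFactorial p (repdigit p a (c + 1)) : ℤ_[p])
  set W := (unitFactorial p (p ^ (c + 1)) : ℤ_[p])
  have hVH : (p : ℤ_[p]) ^ (c + 2) ∣ (W + 1) * (p : ℤ_[p]) ^ (c + 1) :=
    pow_add_two_dvd_mul hW dvd_rfl
  have hpH : (p : ℤ_[p]) ^ (c + 2) ∣ (p : ℤ_[p]) ^ (c + 1) * (H' - H) :=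
    pow_succ (p : ℤ_[p]) (c + 1) ▸ mul_dvd_mul_left _ hH
  have hsum := dvd_add (dvd_add hstep
      (hpow.mul_left ((-1) ^ a * G * (1 + a * (p : ℤ_[p]) ^ (c + 1) * H'))))
    (dvd_sub (hpH.mul_left ((-1) ^ a * G * a)) (hVH.mul_left ((-1) ^ a * G * a ^ 2 * H')))
  refine hsum.trans (dvd_of_eq ?_)
  have hsign : (-1 : ℤ_[p]) ^ a * (-W) ^ a = W ^ a := by rw [← mul_pow, neg_one_mul, neg_neg]
  linear_combination G * (1 + a * (p : ℤ_[p]) ^ (c + 1) * H') * hsign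

theorem neg_one_pow_mul_unitFactorial_repdigit_modEq (hodd : Odd p) {a : ℕ} (ha : a < p) (c : ℕ) :
    (-1) ^ (c * a) * (unitFactorial p (repdigit p a (c + 1)) : ℤ) ≡ a.factorial [ZMOD p] := by
  have h := (unitFactorial_add_mul_pow_modEq hodd le_rfl a (repdigit p a c)).mul_left
    ((-1) ^ (c * a))
  rwa [pow_one, pow_one, mul_comm _ p, add_comm a, ← repdigit_succ', neg_one_pow_repdigit hodd,
    unitFactorial_eq_factorial ha, ← mul_assoc, mul_comm a c, ← mul_pow, neg_one_mul, neg_neg,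
    one_pow, one_mul] at h

theorem pow_add_two_dvd_neg_pow_mul_residueSum_add_sub (hodd : Odd p) {a n c e : ℕ} (ha : 1 ≤ a)
    (hap : a < p - 1) (hn : p ^ c ∣ n) (han : a ≡ n [MOD (p - 1)])
    (he : p * n = a + (p - 1) * e) {r : ℤ} (hr : ¬ (p : ℤ) ∣ r) :
    (p : ℤ_[p]) ^ (c + 2) ∣
      (-(r : ℤ_[p])) ^ n * (residueSum ℤ p r ((1 - X) ^ a * fleckUnit p ^ e) : ℤ) +
        (-1) ^ (c * a) * unitFactorial p (repdigit p a (c + 1)) -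
      a.factorial * (a * (unitFactorial p (p ^ (c + 1)) + 1) - (p : ℤ_[p]) ^ (c + 1) * a *
          ∑ k ∈ range a, ((k + 1 : ℕ) : ℤ_[p]).inv + n * ((r : ℤ_[p]) ^ (p - 1) - 1) -
        p * n * padicBernoulliSum p a r) := by
  have hF := map_dvd (Int.castRingHom ℤ_[p])
    (neg_pow_mul_residueSum_modEq hodd ha hap hn han he hr).symm.dvd
  have hΓ' := pow_add_two_dvd_unitFactorial_repdigit_succ_sub hodd a c
  have hΓ := map_dvd (Int.castRingHom ℤ_[p])
    (neg_one_pow_mul_unitFactorial_repdigit_modEq hodd (by omega : a < p) c).symm.dvd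
  have hY := prime_dvd_neg_pow_mul_residueSum_fermatQuotient_sub (c := c + 1) hodd ha hap.le hr
  have hpn : (p : ℤ_[p]) ^ (c + 1) ∣ p * n := by
    rw [pow_succ']
    exact mul_dvd_mul_left _ (mod_cast Nat.cast_dvd_cast hn)
  have hy := map_dvd (Int.castRingHom ℤ_[p]) (pow_succ_dvd_mul_pow_sub_one_sub_one hr hn)
  have hx : (p : ℤ_[p]) ^ (c + 1) ∣ a * (unitFactorial p (p ^ (c + 1)) + 1) -
      (p : ℤ_[p]) ^ (c + 1) * a * ∑ k ∈ range a, ((k + 1 : ℕ) : ℤ_[p]).inv :=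
    dvd_sub ((pow_succ_dvd_unitFactorial_pow_add_one_padicInt hodd c).mul_left _)
      (mul_assoc _ (a : ℤ_[p]) _ ▸ dvd_mul_right _ _)
  simp only [eq_intCast] at hF hΓ hy
  push_cast at hF hΓ hy hY
  set x := a * (unitFactorial p (p ^ (c + 1)) + 1) -
      (p : ℤ_[p]) ^ (c + 1) * a * ∑ k ∈ range a, ((k + 1 : ℕ) : ℤ_[p]).inv
  set y := (n : ℤ_[p]) * ((r : ℤ_[p]) ^ (p - 1) - 1)
  set G := (unitFactorial p (repdigit p a (c + 1)) : ℤ_[p])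
  set G' := (unitFactorial p (repdigit p a (c + 2)) : ℤ_[p])
  -- Up to the correction term, the sum is `± G * (1 - (1 - x) * (1 - y))`; here `x * y` vanishes
  -- and `± G` may be replaced by `a !`, because `x` and `y` are divisible by `p ^ (c + 1)`.
  have hpnY := mul_dvd_mul hpn hY
  have hΓxy := mul_dvd_mul (dvd_add hx hy) hΓ
  have hxy := pow_add_two_dvd_mul hx hy
  rw [← pow_succ] at hpnY hΓxy
  refine (dvd_sub (dvd_sub (dvd_add (dvd_sub hF (hΓ'.mul_left ((-1) ^ (a * (c + 1)) * (1 - y))))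
    hΓxy) (hxy.mul_left ((-1) ^ (c * a) * G))) hpnY).trans (dvd_of_eq ?_)
  have hsign : (-1 : ℤ_[p]) ^ (a * (c + 1)) * (-1) ^ a = (-1) ^ (c * a) := by
    rw [← pow_add, show a * (c + 1) + a = c * a + 2 * a by ring, pow_add, pow_mul _ 2, neg_one_sq,
      one_pow, mul_one]
  linear_combination (1 - y) * G * (1 - x) * hsign

end FleckQuotientCongruence

section NLow

variable (p n : ℕ) [Fact p.Prime]

theorem natCast_nLow :
    (nLow p n : ℤ) = ((n : ℤ) - 1) % ((p : ℤ) - 1) + 1 := by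
  have := (Fact.out : p.Prime).two_le
  have := Int.emod_nonneg ((n : ℤ) - 1) (show (p : ℤ) - 1 ≠ 0 by omega)
  exact Int.toNat_of_nonneg (by omega)

theorem one_le_nLow : 1 ≤ nLow p n := by
  have := (Fact.out : p.Prime).two_le
  have := Int.emod_nonneg ((n : ℤ) - 1) (show (p : ℤ) - 1 ≠ 0 by omega)
  have := natCast_nLow p n
  omega

theorem nLow_le_sub_one : nLow p n ≤ p - 1 := by
  have := (Fact.out : p.Prime).two_le
  have := Int.emod_lt_of_pos ((n : ℤ) - 1) (show 0 < (p : ℤ) - 1 by omega)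
  have := natCast_nLow p n
  omega

theorem nLow_modEq : nLow p n ≡ n [MOD (p - 1)] := by
  rw [Nat.modEq_iff_dvd, Nat.cast_sub (Fact.out : p.Prime).one_le, Nat.cast_one]
  exact ⟨((n : ℤ) - 1) / ((p : ℤ) - 1), by
    linear_combination -Int.emod_add_mul_ediv ((n : ℤ) - 1) ((p : ℤ) - 1) - natCast_nLow p n⟩

variable {p n}

theorem nLow_lt_sub_one (h : ¬ (p - 1) ∣ n) : nLow p n < p - 1 := by
  refine (nLow_le_sub_one p n).lt_of_ne fun heq => h ?_
  rw [← (nLow_modEq p n).dvd_iff dvd_rfl, heq]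

theorem exists_prime_mul_eq_nLow_add (hn : 0 < n) : ∃ e, p * n = nLow p n + (p - 1) * e := by
  have hle : nLow p n ≤ p * n :=
    ((nLow_le_sub_one p n).trans (Nat.sub_le p 1)).trans (Nat.le_mul_of_pos_right p hn)
  have hmod : nLow p n ≡ p * n [MOD (p - 1)] := by
    have h := mul_prime_pow_modEq_sub_one (p := p) n 1
    rw [pow_one, mul_comm] at h
    exact (nLow_modEq p n).trans h.symm
  obtain ⟨e, he⟩ := (Nat.modEq_iff_dvd' hle).1 hmod
  exact ⟨e, by omega⟩

end NLow

section RationalCongruence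

open Polynomial (X)

variable {p : ℕ} [Fact p.Prime]

theorem Fp_eq_residueSum {a : ℕ} (ha : 1 ≤ a) (hap : a ≤ p - 1) (e : ℕ) (r : ℤ) :
    Fp p (a + (p - 1) * e) r = (residueSum ℤ p r ((1 - X) ^ a * fleckUnit p ^ e) : ℤ) := by
  have hp := (Fact.out : p.Prime)
  have hfloor : Int.fdiv (((a + (p - 1) * e : ℕ) : ℤ) - 1) ((p : ℤ) - 1) = e := by
    have hpos : (0 : ℤ) < (p : ℤ) - 1 := by have := hp.two_le; omega
    rw [Int.fdiv_eq_ediv_of_nonneg _ hpos.le,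
      show ((a + (p - 1) * e : ℕ) : ℤ) - 1 = ((a : ℤ) - 1) + ((p : ℤ) - 1) * e by
        push_cast [Nat.cast_sub hp.one_le]; ring,
      Int.add_mul_ediv_left _ _ hpos.ne', Int.ediv_eq_zero_of_lt (by omega) (by omega), zero_add]
  have hp0 : -(p : ℚ) ≠ 0 := neg_ne_zero.2 (Nat.cast_ne_zero.2 hp.ne_zero)
  rw [Fp, if_neg (by omega), add_zero, hfloor, Cp_eq_residueSum, residueSum_one_sub_X_pow ha,
    zpow_neg, zpow_natCast]
  push_cast
  exact inv_mul_cancel_left₀ (pow_ne_zero e hp0) _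

theorem modCong_of_padic_sub_eq {x y : ℚ} {c : ℕ} {z : ℤ_[p]}
    (h : (x : ℚ_[p]) - y = (p : ℚ_[p]) ^ c * z) : modCong p c x y := by
  refine or_iff_not_imp_left.2 fun hxy => ?_
  have hne : ((x - y : ℚ) : ℚ_[p]) ≠ 0 := Rat.cast_ne_zero.2 (sub_ne_zero.2 hxy)
  have hle : ‖((x - y : ℚ) : ℚ_[p])‖ ≤ (p : ℝ) ^ (-(c : ℤ)) := by
    rw [Rat.cast_sub, h, norm_mul, norm_pow, Padic.norm_p, zpow_neg, zpow_natCast, inv_pow]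
    exact mul_le_of_le_one_right (by positivity) z.2
  rw [Padic.norm_eq_zpow_neg_valuation hne, Padic.valuation_ratCast,
    zpow_le_zpow_iff_right₀ (mod_cast (Fact.out : p.Prime).one_lt)] at hle
  exact neg_le_neg_iff.1 hle

theorem coe_sum_inv_eq_harm {a : ℕ} (ha : a < p) :
    ((∑ k ∈ range a, ((k + 1 : ℕ) : ℤ_[p]).inv : ℤ_[p]) : ℚ_[p]) = (harm a : ℚ) := by
  have hshift : harm a = ∑ k ∈ range a, 1 / ((k + 1 : ℕ) : ℚ) := by
    rw [harm, range_eq_Ico, sum_Ico_add' (fun k : ℕ => 1 / (k : ℚ)) 0 a 1]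
    rfl
  rw [hshift, PadicInt.coe_sum, Rat.cast_sum]
  refine sum_congr rfl fun k hk => ?_
  have hk' := mem_range.1 hk
  rw [coe_padicInt_inv (norm_natCast_padicInt_eq_one_iff.2
    (Nat.not_dvd_of_pos_of_lt k.succ_pos (by omega))), PadicInt.coe_natCast, Rat.cast_div,
    Rat.cast_one, Rat.cast_natCast, one_div]

theorem prod_filter_not_dvd_eq_unitFactorial_repdigit (a b : ℕ) :
    ∏ k ∈ Icc 1 ((p ^ b - 1) / (p - 1) * a) with ¬ p ∣ k, (k : ℚ) =
      unitFactorial p (repdigit p a b) := by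
  rw [repdigit, Nat.geomSum_eq (Fact.out : p.Prime).two_le, mul_comm a,
    ← prod_filter_not_dvd_eq_unitFactorial, Nat.cast_prod]

theorem modCong_neg_pow_mul_residueSum_add_div_factorial (hodd : Odd p) {a n c e : ℕ}
    (ha : 1 ≤ a) (hap : a < p - 1) (hn : p ^ c ∣ n) (han : a ≡ n [MOD (p - 1)])
    (he : p * n = a + (p - 1) * e) {r : ℤ} (hr : ¬ (p : ℤ) ∣ r) :
    modCong p ((c + 1 : ℕ) + 1)
      (((-(r : ℚ)) ^ n * (residueSum ℤ p r ((1 - X) ^ a * fleckUnit p ^ e) : ℤ) +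
        (-1) ^ (c * a) * unitFactorial p (repdigit p a (c + 1))) / a.factorial)
      (a * (p * bernoulli (Nat.totient (p ^ (c + 1))) - p + 1) - p ^ (c + 1) * a * harm a +
        n * ((r : ℚ) ^ (p - 1) - 1) - p * n * ∑ k ∈ Icc 2 (p - a - 1),
          (((a + k).choose a : ℕ) : ℚ) * bernoulli k / ((k : ℚ) * (r : ℚ) ^ k)) := by
  obtain ⟨y, hy⟩ := pow_add_two_dvd_neg_pow_mul_residueSum_add_sub hodd ha hap hn han he hr
  obtain ⟨z, hz, hB⟩ := exists_prime_mul_bernoulli_totient_eq hodd (Nat.le_add_left 1 c)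
  obtain ⟨z, rfl⟩ : ∃ z' : ℤ_[p], (z' : ℚ_[p]) = z := ⟨⟨z, hz⟩, rfl⟩
  have hfac : ‖(a.factorial : ℤ_[p])‖ = 1 := by
    rw [norm_natCast_padicInt_eq_one_iff, (Fact.out : p.Prime).dvd_factorial]
    omega
  have hfac0 : (a.factorial : ℚ_[p]) ≠ 0 := Nat.cast_ne_zero.2 a.factorial_ne_zero
  have hy' := congrArg (fun x : ℤ_[p] => (x : ℚ_[p])) hy
  simp only [PadicInt.coe_sub, PadicInt.coe_add, PadicInt.coe_mul, PadicInt.coe_pow,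
    PadicInt.coe_neg, PadicInt.coe_natCast, PadicInt.coe_intCast, PadicInt.coe_one,
    coe_sum_inv_eq_harm (show a < p by omega), coe_padicBernoulliSum ha hr] at hy'
  refine modCong_of_padic_sub_eq (c := c + 2) (z := (a.factorial : ℤ_[p]).inv * y - a * z) ?_
  simp only [Rat.cast_sub, Rat.cast_add, Rat.cast_mul, Rat.cast_div, Rat.cast_pow, Rat.cast_neg,
    Rat.cast_natCast, Rat.cast_intCast, Rat.cast_one, PadicInt.coe_sub, PadicInt.coe_mul,
    PadicInt.coe_natCast, coe_padicInt_inv hfac]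
  rw [hB]
  field_simp
  linear_combination hy'

end RationalCongruence

theorem stmt10 (p n : ℕ) (r : ℤ) (hp : p.Prime) (hodd : Odd p) (hn : 0 < n)
    (h1 : ¬ (p - 1) ∣ n) (h2 : ¬ (p:ℤ) ∣ r) (b : ℕ) (hb1 : 1 ≤ b)
    (hb2 : b ≤ padicValNat p (p*n)) :
    modCong p ((b:ℤ) + 1)
      (((-(r:ℚ))^n * Fp p (p*n) r
          + (-1:ℚ)^((b-1)*n) *
            ∏ k ∈ (Finset.Icc 1 ((p^b - 1)/(p-1) * nLow p n)).filter (fun k => ¬ p ∣ k), (k:ℚ))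
        / ((nLow p n).factorial : ℚ))
      ((nLow p n : ℚ) * ((p:ℚ) * bernoulli (Nat.totient (p^b)) - (p:ℚ) + 1)
        - (p:ℚ)^b * (nLow p n : ℚ) * harm (nLow p n)
        + (n:ℚ) * ((r:ℚ)^(p-1) - 1)
        - (p:ℚ) * (n:ℚ) * ∑ k ∈ Finset.Icc 2 (p - nLow p n - 1),
            (((nLow p n + k).choose (nLow p n) : ℕ) : ℚ) * bernoulli k / ((k:ℚ) * (r:ℚ)^k)) := by
  have : Fact p.Prime := ⟨hp⟩
  obtain ⟨c, rfl⟩ := Nat.exists_eq_add_of_le' hb1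
  obtain ⟨e, he⟩ := exists_prime_mul_eq_nLow_add (p := p) hn
  have hdvd : p ^ c ∣ n := by
    have h := (padicValNat_dvd_iff_le (mul_ne_zero hp.ne_zero hn.ne')).2 hb2
    rw [pow_succ'] at h
    exact Nat.dvd_of_mul_dvd_mul_left hp.pos h
  have ha := one_le_nLow p n
  have hap := nLow_lt_sub_one h1
  have han := nLow_modEq p n
  have hsign : (-1 : ℚ) ^ (c * n) = (-1) ^ (c * nLow p n) :=
    neg_one_pow_eq_of_modEq_sub_one hodd (han.mul_left c)
  have key := modCong_neg_pow_mul_residueSum_add_div_factorial hodd ha hap hdvd han he h2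
  rwa [← Fp_eq_residueSum ha hap.le, ← he, ← hsign,
    ← prod_filter_not_dvd_eq_unitFactorial_repdigit] at key
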